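/- arXiv:1505.01043 — 8 statements merged into one kernel-verified Lean document; each statement's English description precedes it below -/
import Mathlib

section
/- Let α > 0 and θ ∈ ℝ satisfy (π−θ)/α ∉ ℤ and (π+θ)/α ∉ ℤ. Then for every ρ ∈ (0,1) the series Σ_{k∈ℤ} ρ^{|k|} · exp(−2π²i|k|/α) · exp(−2πikθ/α) converges absolutely, and lim_{ρ→1⁻} (−i/α) · Σ_{k∈ℤ} ρ^{|k|} exp(−2π²i|k|/α) exp(−2πikθ/α) = −(1/(2α)) · sin(2π²/α) / ( sin(π(π−θ)/α) · sin(π(π+θ)/α) ). -/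
open Real Filter Topology

/-!
With `u = exp (-2πi(π + θ)/α)` and `v = exp (-2πi(π - θ)/α)` the Fourier series is the two-sided
geometric series `∑_{k ≥ 0} uᵏ + ∑_{k > 0} vᵏ`, whose Abel means converge to
`(1 - uv) / ((1 - u)(1 - v))` as soon as `u ≠ 1` and `v ≠ 1`. Factoring
`1 - exp (-2iz) = 2i exp (-iz) sin z` three times, the exponentials cancel and the quotient of sines
remains.
-/

section TwoSidedGeometricSeries

variable {𝕜 : Type*} [NormedField 𝕜] {r u v : 𝕜}

-- `u ^ k.toNat * v ^ (-k).toNat` is `u ^ k` for `k ≥ 0` and `v ^ |k|` for `k ≤ 0`.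
lemma hasSum_pow_toNat_mul_pow_toNat_neg (hu : ‖u‖ < 1) (hv : ‖v‖ < 1) :
    HasSum (fun k : ℤ => u ^ k.toNat * v ^ (-k).toNat) ((1 - u * v) / ((1 - u) * (1 - v))) := by
  have one_sub_ne_zero {w : 𝕜} (hw : ‖w‖ < 1) : 1 - w ≠ 0 :=
    sub_ne_zero.2 fun h => by simp [← h] at hw
  have sum_eq : (1 - u * v) / ((1 - u) * (1 - v)) = (1 - u)⁻¹ + v * (1 - v)⁻¹ := by
    field_simp [one_sub_ne_zero hu, one_sub_ne_zero hv]
    ring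
  rw [sum_eq]
  apply HasSum.of_nat_of_neg_add_one
  · simpa using hasSum_geometric_of_norm_lt_one hu
  · have toNat_neg_succ (n : ℕ) : (-((n : ℤ) + 1)).toNat = 0 := by omega
    have toNat_succ (n : ℕ) : ((n : ℤ) + 1).toNat = n + 1 := by omega
    simpa only [neg_neg, toNat_neg_succ, toNat_succ, pow_zero, one_mul, pow_succ'] using
      (hasSum_geometric_of_norm_lt_one hv).mul_left v

lemma hasSum_pow_natAbs_mul_pow_toNat_mul_pow_toNat_neg (hr : ‖r‖ < 1) (hu : ‖u‖ ≤ 1)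
    (hv : ‖v‖ ≤ 1) :
    HasSum (fun k : ℤ => r ^ k.natAbs * (u ^ k.toNat * v ^ (-k).toNat))
      ((1 - r * u * (r * v)) / ((1 - r * u) * (1 - r * v))) := by
  have norm_mul_lt_one {w : 𝕜} (hw : ‖w‖ ≤ 1) : ‖r * w‖ < 1 := by
    rw [norm_mul]
    exact mul_lt_one_of_nonneg_of_lt_one_left (norm_nonneg r) hr hw
  refine (hasSum_pow_toNat_mul_pow_toNat_neg
    (norm_mul_lt_one hu) (norm_mul_lt_one hv)).congr_fun fun k => ?_
  rw [← Int.toNat_add_toNat_neg_eq_natAbs]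
  ring

lemma tendsto_tsum_pow_natAbs_mul_pow_toNat_mul_pow_toNat_neg (hu : ‖u‖ ≤ 1) (hv : ‖v‖ ≤ 1)
    (hu₁ : u ≠ 1) (hv₁ : v ≠ 1) :
    Tendsto (fun r : 𝕜 => ∑' k : ℤ, r ^ k.natAbs * (u ^ k.toNat * v ^ (-k).toNat))
      (𝓝[Metric.ball 0 1] 1) (𝓝 ((1 - u * v) / ((1 - u) * (1 - v)))) := by
  have denom_ne_zero : (1 - 1 * u) * (1 - 1 * v) ≠ 0 := by
    simpa only [one_mul] using mul_ne_zero (sub_ne_zero.2 hu₁.symm) (sub_ne_zero.2 hv₁.symm)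
  have continuousAt_sum :
      ContinuousAt (fun r : 𝕜 => (1 - r * u * (r * v)) / ((1 - r * u) * (1 - r * v))) 1 := by
    fun_prop (disch := exact denom_ne_zero)
  have tendsto_sum := continuousAt_sum.tendsto.mono_left
    (nhdsWithin_le_nhds (s := Metric.ball 0 1))
  simp only [one_mul] at tendsto_sum
  refine tendsto_sum.congr' ?_
  filter_upwards [self_mem_nhdsWithin] with r hr
  exact (hasSum_pow_natAbs_mul_pow_toNat_mul_pow_toNat_neg
    (mem_ball_zero_iff.1 hr) hu hv).tsum_eq.symm

end TwoSidedGeometricSeries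

lemma one_sub_exp_neg_two_I_mul (z : ℂ) :
    1 - Complex.exp (-(2 * Complex.I * z)) =
      2 * Complex.I * Complex.exp (-(Complex.I * z)) * Complex.sin z := by
  have exp_double : Complex.exp (-(2 * Complex.I * z)) =
      Complex.exp (-(Complex.I * z)) * Complex.exp (-(Complex.I * z)) := by
    rw [← Complex.exp_add]
    ring_nf
  have exp_cancel : Complex.exp (-(Complex.I * z)) * Complex.exp (Complex.I * z) = 1 := by
    rw [← Complex.exp_add, neg_add_cancel, Complex.exp_zero]
  have two_I_mul_sin : 2 * Complex.I * Complex.sin z =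
      Complex.exp (Complex.I * z) - Complex.exp (-(Complex.I * z)) := by
    rw [mul_right_comm, Complex.two_sin, mul_assoc, Complex.I_mul_I, neg_mul, mul_comm z]
    ring
  rw [mul_right_comm (2 * Complex.I), two_I_mul_sin, exp_double, ← exp_cancel]
  ring

lemma exp_neg_two_I_mul_ne_one {z : ℂ} (hz : Complex.sin z ≠ 0) :
    Complex.exp (-(2 * Complex.I * z)) ≠ 1 := by
  refine (sub_ne_zero.1 ?_).symm
  rw [one_sub_exp_neg_two_I_mul]
  exact mul_ne_zero (mul_ne_zero (by simp) (Complex.exp_ne_zero _)) hz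

lemma norm_exp_neg_two_I_mul_ofReal (x : ℝ) : ‖Complex.exp (-(2 * Complex.I * x))‖ = 1 := by
  rw [Complex.norm_exp]
  simp

lemma one_sub_exp_mul_exp_div_eq_sin_add_div (a b : ℂ) :
    (1 - Complex.exp (-(2 * Complex.I * a)) * Complex.exp (-(2 * Complex.I * b))) /
        ((1 - Complex.exp (-(2 * Complex.I * a))) * (1 - Complex.exp (-(2 * Complex.I * b)))) =
      Complex.sin (a + b) / (2 * Complex.I * (Complex.sin a * Complex.sin b)) := by
  rw [← Complex.exp_add, ← neg_add, ← mul_add]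
  simp only [one_sub_exp_neg_two_I_mul]
  rw [mul_add, neg_add, Complex.exp_add]
  field_simp

lemma exp_mul_natAbs_mul_exp_mul_int (x y : ℂ) (k : ℤ) :
    Complex.exp (x * k.natAbs) * Complex.exp (y * k) =
      Complex.exp (x + y) ^ k.toNat * Complex.exp (x - y) ^ (-k).toNat := by
  have cast_eq_sub : (k : ℂ) = k.toNat - (-k).toNat := mod_cast k.toNat_sub_toNat_neg.symm
  rw [← Complex.exp_nat_mul, ← Complex.exp_nat_mul, ← Complex.exp_add, ← Complex.exp_add,
    ← Int.toNat_add_toNat_neg_eq_natAbs, cast_eq_sub]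
  push_cast
  ring_nf

lemma halfWave_fourier_term_eq (α t θ : ℂ) (k : ℤ) :
    Complex.exp (-(2 * π * t * Complex.I * k.natAbs) / α) *
        Complex.exp (-(2 * π * Complex.I * k * θ) / α) =
      Complex.exp (-(2 * Complex.I * (π * (t + θ) / α))) ^ k.toNat *
        Complex.exp (-(2 * Complex.I * (π * (t - θ) / α))) ^ (-k).toNat := by
  convert exp_mul_natAbs_mul_exp_mul_int
    (-(2 * π * t * Complex.I) / α) (-(2 * π * Complex.I * θ) / α) k using 3 <;> ring_nf

lemma sin_pi_mul_div_ne_zero {x α : ℝ} (hx : ∀ n : ℤ, x / α ≠ n) : sin (π * x / α) ≠ 0 := by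
  intro sin_eq_zero
  obtain ⟨n, hn⟩ := sin_eq_zero_iff.1 sin_eq_zero
  apply hx n
  apply mul_left_cancel₀ pi_ne_zero
  rw [← mul_div_assoc, ← hn, mul_comm]

lemma tendsto_ofReal_nhdsWithin_ball :
    Tendsto ((↑) : ℝ → ℂ) (𝓝[Set.Ioo 0 1] 1) (𝓝[Metric.ball 0 1] 1) := by
  refine tendsto_nhdsWithin_of_tendsto_nhds_of_eventually_within _ ?_ ?_
  · simpa using (Complex.continuous_ofReal.tendsto 1).mono_left nhdsWithin_le_nhds
  · filter_upwards [self_mem_nhdsWithin] with ρ hρ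
    exact mem_ball_zero_iff.2 ((Complex.norm_of_nonneg hρ.1.le).trans_lt hρ.2)

lemma tendsto_tsum_pow_natAbs_mul_exp_pow_mul_exp_pow {a b : ℝ} (ha : sin a ≠ 0)
    (hb : sin b ≠ 0) :
    Tendsto (fun ρ : ℝ => ∑' k : ℤ, (ρ : ℂ) ^ k.natAbs *
        (Complex.exp (-(2 * Complex.I * a)) ^ k.toNat *
          Complex.exp (-(2 * Complex.I * b)) ^ (-k).toNat))
      (𝓝[Set.Ioo 0 1] 1)
      (𝓝 (Complex.sin (a + b) / (2 * Complex.I * (Complex.sin a * Complex.sin b)))) := by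
  rw [← one_sub_exp_mul_exp_div_eq_sin_add_div]
  exact (tendsto_tsum_pow_natAbs_mul_pow_toNat_mul_pow_toNat_neg
    (norm_exp_neg_two_I_mul_ofReal a).le (norm_exp_neg_two_I_mul_ofReal b).le
    (exp_neg_two_I_mul_ne_one (mod_cast ha))
    (exp_neg_two_I_mul_ne_one (mod_cast hb))).comp tendsto_ofReal_nhdsWithin_ball

/-- The diffraction kernel is the case `t = π` of the kernel of `-i exp (-it√Δ)` on the circle
`ℝ/αℤ`. -/
theorem abel_limit_diffraction_kernel_general (α t θ : ℝ)
    (h₁ : ∀ n : ℤ, (t - θ) / α ≠ (n : ℝ)) (h₂ : ∀ n : ℤ, (t + θ) / α ≠ (n : ℝ)) :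
    (∀ ρ ∈ Set.Ioo (0 : ℝ) 1,
      Summable (fun k : ℤ =>
        ‖(ρ : ℂ) ^ k.natAbs *
          Complex.exp (-(2 * (π : ℂ) * (t : ℂ) * Complex.I * (k.natAbs : ℂ)) / (α : ℂ)) *
          Complex.exp (-(2 * (π : ℂ) * Complex.I * (k : ℂ) * (θ : ℂ)) / (α : ℂ))‖)) ∧
    Tendsto (fun ρ : ℝ => (-Complex.I / (α : ℂ)) *
        ∑' k : ℤ, (ρ : ℂ) ^ k.natAbs *
          Complex.exp (-(2 * (π : ℂ) * (t : ℂ) * Complex.I * (k.natAbs : ℂ)) / (α : ℂ)) *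
          Complex.exp (-(2 * (π : ℂ) * Complex.I * (k : ℂ) * (θ : ℂ)) / (α : ℂ)))
      (nhdsWithin 1 (Set.Ioo (0 : ℝ) 1))
      (nhds ((↑(-(1 / (2 * α)) * Real.sin (2 * π * t / α) /
        (Real.sin (π * (t - θ) / α) * Real.sin (π * (t + θ) / α))) : ℂ))) := by
  simp only [mul_assoc (_ ^ _), halfWave_fourier_term_eq]
  set a : ℝ := π * (t + θ) / α with ha
  set b : ℝ := π * (t - θ) / α with hb
  have cast_a : (π * (t + θ) / α : ℂ) = a := by simp [ha]
  have cast_b : (π * (t - θ) / α : ℂ) = b := by simp [hb]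
  have add_eq : 2 * π * t / α = a + b := by rw [ha, hb]; ring
  simp only [cast_a, cast_b, add_eq]
  constructor
  · intro ρ hρ
    have norm_ρ_lt : ‖(ρ : ℂ)‖ < 1 := (Complex.norm_of_nonneg hρ.1.le).trans_lt hρ.2
    exact (hasSum_pow_natAbs_mul_pow_toNat_mul_pow_toNat_neg norm_ρ_lt
      (norm_exp_neg_two_I_mul_ofReal a).le (norm_exp_neg_two_I_mul_ofReal b).le).summable.norm
  · have sin_a_ne_zero : sin a ≠ 0 := sin_pi_mul_div_ne_zero h₂
    have sin_b_ne_zero : sin b ≠ 0 := sin_pi_mul_div_ne_zero h₁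
    convert (tendsto_tsum_pow_natAbs_mul_exp_pow_mul_exp_pow sin_a_ne_zero
      sin_b_ne_zero).const_mul (-Complex.I / (α : ℂ)) using 2
    push_cast
    field_simp

/-- Abel summation of the Fourier series of the diffraction kernel of the cone of
angle `α`: for `ρ ∈ (0,1)` the series `∑_{k∈ℤ} ρ^{|k|} e^{-2π²i|k|/α} e^{-2πikθ/α}`
converges absolutely, and the Abel limit of `(-i/α)` times its sum, as `ρ → 1⁻`,
is `-(1/(2α)) sin(2π²/α) / (sin(π(π-θ)/α) sin(π(π+θ)/α))`. -/
theorem abel_limit_diffraction_kernel (α θ : ℝ) (hα : 0 < α)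
    (h₁ : ∀ n : ℤ, (π - θ) / α ≠ (n : ℝ)) (h₂ : ∀ n : ℤ, (π + θ) / α ≠ (n : ℝ)) :
    (∀ ρ ∈ Set.Ioo (0 : ℝ) 1,
      Summable (fun k : ℤ =>
        ‖(ρ : ℂ) ^ k.natAbs *
          Complex.exp (-(2 * (π : ℂ) ^ 2 * Complex.I * (k.natAbs : ℂ)) / (α : ℂ)) *
          Complex.exp (-(2 * (π : ℂ) * Complex.I * (k : ℂ) * (θ : ℂ)) / (α : ℂ))‖)) ∧
    Tendsto (fun ρ : ℝ => (-Complex.I / (α : ℂ)) *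
        ∑' k : ℤ, (ρ : ℂ) ^ k.natAbs *
          Complex.exp (-(2 * (π : ℂ) ^ 2 * Complex.I * (k.natAbs : ℂ)) / (α : ℂ)) *
          Complex.exp (-(2 * (π : ℂ) * Complex.I * (k : ℂ) * (θ : ℂ)) / (α : ℂ)))
      (nhdsWithin 1 (Set.Ioo (0 : ℝ) 1))
      (nhds ((↑(-(1 / (2 * α)) * Real.sin (2 * π ^ 2 / α) /
        (Real.sin (π * (π - θ) / α) * Real.sin (π * (π + θ) / α))) : ℂ))) := by
  simpa only [sq, ← mul_assoc] using abel_limit_diffraction_kernel_general α π θ h₁ h₂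
end

section
/- Let α > 0 with sin(2π²/α) ≠ 0, and let S_α be the diffraction coefficient S_α(θ) = −(1/(2α)) · sin(2π²/α) / ( sin(π(π−θ)/α) · sin(π(π+θ)/α) ). Then the limit of sin(θ) · S_α(−π−θ) as θ → 0 (through values θ ≠ 0) equals 1/(2π), and the limit of sin(θ) · S_α(θ) as θ → π (through values θ ≠ π) equals −1/(2π). -/
open Real Filter Topology

/-!
The coefficient `S_α` is even and has a simple pole at `π`, produced by the factor
`sin (π(π - θ)/α)`. There `sin θ / sin (π(π - θ)/α) → α/π`, while the other factor
`sin (π(π + θ)/α)` tends to `sin (2π²/α) ≠ 0` and cancels the numerator. This gives the limit at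
`π`; the other one follows from `S_α(-π - θ) = S_α(π + θ)` and `sin θ = -sin (π + θ)`.
-/

/-- The diffraction coefficient `S_α(θ)`, i.e. the kernel of the absolute scattering matrix, of the
Euclidean cone of angle `α`. Division by zero makes it `0` where a sine in the denominator
vanishes. -/
noncomputable def diffractionCoefficient (α θ : ℝ) : ℝ :=
  -(1 / (2 * α)) * Real.sin (2 * π ^ 2 / α) /
    (Real.sin (π * (π - θ) / α) * Real.sin (π * (π + θ) / α))

theorem diffractionCoefficient_neg (α θ : ℝ) :
    diffractionCoefficient α (-θ) = diffractionCoefficient α θ := by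
  simp only [diffractionCoefficient, sub_neg_eq_add, ← sub_eq_add_neg, mul_comm]

theorem tendsto_sin_div_sin_mul_pi_sub {c : ℝ} (hc : c ≠ 0) :
    Tendsto (fun θ => Real.sin θ / Real.sin (c * (π - θ))) (𝓝[≠] π) (𝓝 c⁻¹) := by
  have hderiv (θ : ℝ) :
      HasDerivAt (fun θ => Real.sin (c * (π - θ))) (Real.cos (c * (π - θ)) * -c) θ := by
    simpa using (((hasDerivAt_id θ).const_sub π).const_mul c).sin
  have hcont_deriv : Continuous fun θ => Real.cos (c * (π - θ)) * -c := by fun_prop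
  have hcont_sin : Continuous fun θ => Real.sin (c * (π - θ)) := by fun_prop
  have hderiv_ne : Real.cos (c * (π - π)) * -c ≠ 0 := by simpa using hc
  refine HasDerivAt.lhopital_zero_nhds (.of_forall Real.hasDerivAt_sin) (.of_forall hderiv)
    (hcont_deriv.continuousAt.eventually_ne hderiv_ne) ?_ ?_ ?_
  · simpa using Real.continuous_sin.tendsto π
  · simpa using hcont_sin.tendsto π
  · simpa [Pi.div_def] using (Real.continuous_cos.tendsto π).div (hcont_deriv.tendsto π) hderiv_ne

theorem tendsto_sin_mul_diffractionCoefficient_pi {α : ℝ}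
    (hsin : Real.sin (2 * π ^ 2 / α) ≠ 0) :
    Tendsto (fun θ => Real.sin θ * diffractionCoefficient α θ) (𝓝[≠] π) (𝓝 (-(1 / (2 * π)))) := by
  have hα : α ≠ 0 := by
    rintro rfl
    simp at hsin
  have hpole : Tendsto (fun θ => Real.sin θ / Real.sin (π / α * (π - θ))) (𝓝[≠] π)
      (𝓝 (π / α)⁻¹) :=
    tendsto_sin_div_sin_mul_pi_sub (div_ne_zero pi_ne_zero hα)
  have hregular : Tendsto (fun θ => Real.sin (π * (π + θ) / α)) (𝓝[≠] π)
      (𝓝 (Real.sin (2 * π ^ 2 / α))) := by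
    have hcont : Continuous fun θ => Real.sin (π * (π + θ) / α) := by fun_prop
    have hvalue : π * (π + π) / α = 2 * π ^ 2 / α := by ring
    simpa only [hvalue] using (hcont.tendsto π).mono_left nhdsWithin_le_nhds
  have hlimit : -(1 / (2 * α)) * Real.sin (2 * π ^ 2 / α) *
      ((π / α)⁻¹ / Real.sin (2 * π ^ 2 / α)) = -(1 / (2 * π)) := by
    generalize Real.sin (2 * π ^ 2 / α) = s at hsin
    field_simp
  rw [← hlimit]
  refine ((hpole.div hregular hsin).const_mul _).congr fun θ => ?_
  simp only [diffractionCoefficient, Pi.div_apply, div_mul_eq_mul_div π α, div_div]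
  ring

theorem tendsto_sin_mul_diffractionCoefficient_neg_pi_sub {α : ℝ}
    (hsin : Real.sin (2 * π ^ 2 / α) ≠ 0) :
    Tendsto (fun θ => Real.sin θ * diffractionCoefficient α (-π - θ)) (𝓝[≠] 0)
      (𝓝 (1 / (2 * π))) := by
  have hshift : Tendsto (fun θ => π + θ) (𝓝[≠] 0) (𝓝[≠] π) := by
    simp [Tendsto]
  rw [← neg_neg (1 / (2 * π))]
  refine ((tendsto_sin_mul_diffractionCoefficient_pi hsin).comp hshift).neg.congr fun θ => ?_
  rw [Function.comp_apply, ← neg_add', diffractionCoefficient_neg, add_comm π, Real.sin_add_pi,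
    neg_mul, neg_neg]

/-- Regularized limits of the diffraction coefficient
`S_α(θ) = -(1/(2α)) sin(2π²/α) / (sin(π(π-θ)/α) sin(π(π+θ)/α))` of the Euclidean cone
of angle `α`: `sin θ · S_α(-π-θ) → 1/(2π)` as `θ → 0` and
`sin θ · S_α(θ) → -1/(2π)` as `θ → π`. -/
theorem diffraction_coefficient_limits (α : ℝ) (hα : 0 < α)
    (hsin : Real.sin (2 * π ^ 2 / α) ≠ 0)
    (S : ℝ → ℝ)
    (hS : ∀ θ : ℝ, S θ = -(1 / (2 * α)) * Real.sin (2 * π ^ 2 / α) /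
      (Real.sin (π * (π - θ) / α) * Real.sin (π * (π + θ) / α))) :
    Tendsto (fun θ : ℝ => Real.sin θ * S (-π - θ)) (𝓝[≠] 0) (𝓝 (1 / (2 * π))) ∧
    Tendsto (fun θ : ℝ => Real.sin θ * S θ) (𝓝[≠] π) (𝓝 (-(1 / (2 * π)))) := by
  obtain rfl : S = diffractionCoefficient α := funext hS
  exact ⟨tendsto_sin_mul_diffractionCoefficient_neg_pi_sub hsin,
    tendsto_sin_mul_diffractionCoefficient_pi hsin⟩
end

section
/- Fix ε ∈ {+1, −1}. For every test function φ on ℝ_t × C°_{4π}, one has ∫_0^{4π} ∫_0^∞ √r · e^{iεθ/2} · ( ∂_t²φ − ∂_r²φ − r⁻¹∂_rφ − r⁻²∂_θ²φ )(r, r, θ) dr dθ = 0. In other words, the distribution u = r^{−1/2} e^{iεθ/2} δ(t − r), supported exactly on the light cone {t = r}, is a distributional solution of the wave equation (∂_t² − Δ)u = 0 on ℝ_t × C°_{4π} (sharp Huygens principle on the cone of angle 4π). -/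
open Real Filter Topology MeasureTheory

/-! The restriction to the light cone `t = r` of `√r · g(θ) · (∂_t² - Δ)φ`, where `g'' = -g/4`, is
the divergence in `(θ, r)` of a pair of fluxes. The derivative along the cone is `∂_t + ∂_r`, so
`∂_r [√r (∂_t - ∂_r)φ - φ / (2√r)] = √r (∂_t² - ∂_r²)φ - r^{-1/2} ∂_rφ + r^{-3/2} φ / 4` there. The
last term is an excess, and it is exactly what completes `-r^{-3/2} g ∂_θ²φ` to the `θ`-derivative
of `-r^{-3/2} (g ∂_θφ - g' φ)`. By the divergence theorem only boundary terms remain: the radial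
ones vanish by the support condition and the angular ones cancel by periodicity. -/

section Calculus

variable {𝕜 E G : Type*} [NontriviallyNormedField 𝕜] [NormedAddCommGroup E] [NormedSpace 𝕜 E]
  [NormedAddCommGroup G] [NormedSpace 𝕜 G] {F : E → G} {c : 𝕜 → E} {v : E}

lemma deriv_comp_of_hasDerivAt_const (hF : Differentiable 𝕜 F) (hc : ∀ x, HasDerivAt c v x) :
    deriv (fun x => F (c x)) = fun x => fderiv 𝕜 F (c x) v :=
  funext fun x => ((hF (c x)).hasFDerivAt.comp_hasDerivAt x (hc x)).deriv

lemma hasDerivAt_fderiv_comp_apply (hF : ContDiff 𝕜 2 F) {x : 𝕜} (hc : HasDerivAt c v x) (w : E) :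
    HasDerivAt (fun y => fderiv 𝕜 F (c y) w) (fderiv 𝕜 (fderiv 𝕜 F) (c x) v w) x := by
  have hF' : DifferentiableAt 𝕜 (fderiv 𝕜 F) (c x) :=
    (hF.fderiv_right (m := 1) (by norm_num)).differentiable one_ne_zero _
  simpa using (hF'.hasFDerivAt.comp_hasDerivAt x hc).clm_apply (hasDerivAt_const x w)

lemma deriv_deriv_comp_of_hasDerivAt_const (hF : ContDiff 𝕜 2 F) (hc : ∀ x, HasDerivAt c v x) :
    deriv (deriv fun x => F (c x)) = fun x => fderiv 𝕜 (fderiv 𝕜 F) (c x) v v := by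
  rw [deriv_comp_of_hasDerivAt_const (hF.differentiable two_ne_zero) hc]
  exact funext fun x => (hasDerivAt_fderiv_comp_apply hF (hc x) v).deriv

lemma periodic_fderiv (hF : Function.Periodic F v) : Function.Periodic (fderiv 𝕜 F) v := fun x => by
  rw [← fderiv_comp_add_right]
  exact congrArg (fderiv 𝕜 · x) (funext hF)

lemma fderiv_fderiv_add_sub [IsRCLikeNormedField 𝕜] (hF : ContDiff 𝕜 2 F) (x v w : E) :
    fderiv 𝕜 (fderiv 𝕜 F) x (v + w) (v - w) =
      fderiv 𝕜 (fderiv 𝕜 F) x v v - fderiv 𝕜 (fderiv 𝕜 F) x w w := by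
  have hsymm : fderiv 𝕜 (fderiv 𝕜 F) x v w = fderiv 𝕜 (fderiv 𝕜 F) x w v :=
    (hF.contDiffAt.isSymmSndFDerivAt (by simp)).eq v w
  simp only [map_add, map_sub, add_apply, hsymm]
  abel

end Calculus

lemma ofReal_sqrt_ne_zero {r : ℝ} (hr : 0 < r) : (√r : ℂ) ≠ 0 :=
  Complex.ofReal_ne_zero.2 (sqrt_pos.2 hr).ne'

lemma hasDerivAt_ofReal_sqrt {r : ℝ} (hr : r ≠ 0) :
    HasDerivAt (fun x : ℝ => (√x : ℂ)) (1 / (2 * (√r : ℂ))) r := by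
  simpa using (hasDerivAt_sqrt hr).ofReal_comp

lemma contDiffOn_ofReal_sqrt {n : WithTop ℕ∞} :
    ContDiffOn ℝ n (fun x : ℝ => (√x : ℂ)) {0}ᶜ := fun _ hx =>
  (Complex.ofRealCLM.contDiff.contDiffAt.comp _ (contDiffAt_sqrt hx)).contDiffWithinAt

lemma contDiffOn_ofReal_sqrt_snd {n : WithTop ℕ∞} :
    ContDiffOn ℝ n (fun q : ℝ × ℝ => (√q.2 : ℂ)) {q | 0 < q.2} :=
  contDiffOn_ofReal_sqrt.comp contDiffOn_snd fun _ hq => hq.ne'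

lemma exists_subset_Ioo_of_isCompact {α : Type*} [LinearOrder α] [TopologicalSpace α]
    [OrderClosedTopology α] [DenselyOrdered α] [NoMaxOrder α] {K : Set α} {c : α}
    (hK : IsCompact K) (hKc : K ⊆ Set.Ioi c) : ∃ a b, c < a ∧ a < b ∧ K ⊆ Set.Ioo a b := by
  rcases K.eq_empty_or_nonempty with rfl | hne
  · obtain ⟨a, hca⟩ := exists_gt c
    obtain ⟨b, hab⟩ := exists_gt a
    exact ⟨a, b, hca, hab, Set.empty_subset _⟩
  · obtain ⟨m, hm⟩ := hK.exists_isLeast hne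
    obtain ⟨M, hM⟩ := hK.exists_isGreatest hne
    obtain ⟨a, hca, ham⟩ := exists_between (hKc hm.1)
    obtain ⟨b, hMb⟩ := exists_gt M
    exact ⟨a, b, hca, ham.trans ((hm.2 hM.1).trans_lt hMb),
      fun x hx => ⟨ham.trans_le (hm.2 hx), (hM.2 hx).trans_lt hMb⟩⟩

section Divergence

variable {E : Type*} [NormedAddCommGroup E] [NormedSpace ℝ E]

lemma deriv_fst_eq_fderiv {f : ℝ × ℝ → E} {x y : ℝ} (hf : DifferentiableAt ℝ f (x, y)) :
    deriv (fun z => f (z, y)) x = fderiv ℝ f (x, y) (1, 0) :=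
  (hf.hasFDerivAt.comp_hasDerivAt x ((hasDerivAt_id x).prodMk (hasDerivAt_const x y))).deriv

lemma deriv_snd_eq_fderiv {f : ℝ × ℝ → E} {x y : ℝ} (hf : DifferentiableAt ℝ f (x, y)) :
    deriv (fun z => f (x, z)) y = fderiv ℝ f (x, y) (0, 1) :=
  (hf.hasFDerivAt.comp_hasDerivAt y ((hasDerivAt_const y x).prodMk (hasDerivAt_id y))).deriv

lemma integral_divergence_rectangle_of_contDiffOn {f g : ℝ × ℝ → E} {U : Set (ℝ × ℝ)}
    {a₁ b₁ a₂ b₂ : ℝ} (hU : IsOpen U) (hf : ContDiffOn ℝ 1 f U) (hg : ContDiffOn ℝ 1 g U)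
    (hsub : Set.uIcc a₁ b₁ ×ˢ Set.uIcc a₂ b₂ ⊆ U) :
    ∫ x in a₁..b₁, ∫ y in a₂..b₂, deriv (fun z => f (z, y)) x + deriv (fun z => g (x, z)) y =
      (((∫ x in a₁..b₁, g (x, b₂)) - ∫ x in a₁..b₁, g (x, a₂)) + ∫ y in a₂..b₂, f (b₁, y)) -
        ∫ y in a₂..b₂, f (a₁, y) := by
  have hdf {p} (hp : p ∈ U) : DifferentiableAt ℝ f p :=
    (hf.differentiableOn one_ne_zero).differentiableAt (hU.mem_nhds hp)
  have hdg {p} (hp : p ∈ U) : DifferentiableAt ℝ g p :=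
    (hg.differentiableOn one_ne_zero).differentiableAt (hU.mem_nhds hp)
  have hrect {p} (hp : p ∈ Set.Ioo (min a₁ b₁) (max a₁ b₁) ×ˢ Set.Ioo (min a₂ b₂) (max a₂ b₂)) :
      p ∈ U := hsub (Set.prod_mono Set.Ioo_subset_Icc_self Set.Ioo_subset_Icc_self hp)
  have hcont : ContinuousOn (fun p => fderiv ℝ f p (1, 0) + fderiv ℝ g p (0, 1)) U :=
    ((hf.continuousOn_fderiv_of_isOpen hU le_rfl).clm_apply continuousOn_const).add
      ((hg.continuousOn_fderiv_of_isOpen hU le_rfl).clm_apply continuousOn_const)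
  rw [← integral2_divergence_prod_of_hasFDerivAt f g (fderiv ℝ f) (fderiv ℝ g) a₁ a₂ b₁ b₂
    (hf.continuousOn.mono hsub) (hg.continuousOn.mono hsub)
    (fun p hp => (hdf (hrect hp)).hasFDerivAt) (fun p hp => (hdg (hrect hp)).hasFDerivAt)
    ((hcont.mono hsub).integrableOn_compact (isCompact_uIcc.prod isCompact_uIcc))]
  refine intervalIntegral.integral_congr fun x hx => intervalIntegral.integral_congr fun y hy => ?_
  have hxy : (x, y) ∈ U := hsub ⟨hx, hy⟩
  simp only [deriv_fst_eq_fderiv (hdf hxy), deriv_snd_eq_fderiv (hdg hxy)]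

end Divergence

/-- The wave operator `∂_t² - ∂_r² - r⁻¹∂_r - r⁻²∂_θ²` of a cone, in polar coordinates, acting on a
function of `(t, r, θ)`. The angle of the cone enters only as the period in `θ` of the functions it
is applied to. -/
noncomputable def coneDAlembertian (F : ℝ × ℝ × ℝ → ℂ) (t r θ : ℝ) : ℂ :=
  deriv (deriv fun t' => F (t', r, θ)) t - deriv (deriv fun r' => F (t, r', θ)) r
    - (r : ℂ)⁻¹ * deriv (fun r' => F (t, r', θ)) r
    - ((r : ℂ) ^ 2)⁻¹ * deriv (deriv fun θ' => F (t, r, θ')) θ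

/-- The radial component, at `q = (θ, r)`, of the vector field whose divergence is the restriction
of `√r g(θ) (∂_t² - Δ)F` to the light cone: `g (√r (∂_t - ∂_r)F - F / (2√r))` at `(r, r, θ)`. -/
noncomputable def radialFlux (g : ℝ → ℂ) (F : ℝ × ℝ × ℝ → ℂ) (q : ℝ × ℝ) : ℂ :=
  g q.1 * (√q.2 * fderiv ℝ F (q.2, q.2, q.1) (1, -1, 0) - F (q.2, q.2, q.1) / (2 * √q.2))

/-- The angular component, at `q = (θ, r)`, of the vector field whose divergence is the restriction
of `√r g(θ) (∂_t² - Δ)F` to the light cone: `-r^{-3/2} (g ∂_θF - g' F)` at `(r, r, θ)`. -/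
noncomputable def angularFlux (g : ℝ → ℂ) (F : ℝ × ℝ × ℝ → ℂ) (q : ℝ × ℝ) : ℂ :=
  -((√q.2 : ℂ) ^ 3)⁻¹ *
    (g q.1 * fderiv ℝ F (q.2, q.2, q.1) (0, 0, 1) - deriv g q.1 * F (q.2, q.2, q.1))

section Cone

variable {g : ℝ → ℂ} {F : ℝ × ℝ × ℝ → ℂ} {T r θ : ℝ}

lemma coneDAlembertian_eq_fderiv (hF : ContDiff ℝ 2 F) (t r θ : ℝ) :
    coneDAlembertian F t r θ =
      fderiv ℝ (fderiv ℝ F) (t, r, θ) (1, 0, 0) (1, 0, 0)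
        - fderiv ℝ (fderiv ℝ F) (t, r, θ) (0, 1, 0) (0, 1, 0)
        - (r : ℂ)⁻¹ * fderiv ℝ F (t, r, θ) (0, 1, 0)
        - ((r : ℂ) ^ 2)⁻¹ * fderiv ℝ (fderiv ℝ F) (t, r, θ) (0, 0, 1) (0, 0, 1) := by
  have ht (x) : HasDerivAt (fun t' => (t', r, θ)) ((1, 0, 0) : ℝ × ℝ × ℝ) x :=
    (hasDerivAt_id x).prodMk (hasDerivAt_const x (r, θ))
  have hr (x) : HasDerivAt (fun r' => (t, r', θ)) ((0, 1, 0) : ℝ × ℝ × ℝ) x :=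
    (hasDerivAt_const x t).prodMk ((hasDerivAt_id x).prodMk (hasDerivAt_const x θ))
  have hθ (x) : HasDerivAt (fun θ' => (t, r, θ')) ((0, 0, 1) : ℝ × ℝ × ℝ) x :=
    (hasDerivAt_const x t).prodMk ((hasDerivAt_const x r).prodMk (hasDerivAt_id x))
  rw [coneDAlembertian, deriv_deriv_comp_of_hasDerivAt_const hF ht,
    deriv_deriv_comp_of_hasDerivAt_const hF hr, deriv_deriv_comp_of_hasDerivAt_const hF hθ,
    deriv_comp_of_hasDerivAt_const (hF.differentiable two_ne_zero) hr]

lemma coneDAlembertian_eq_zero_of_notMem_tsupport (hF : ContDiff ℝ 2 F) {t : ℝ}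
    (h : (t, r, θ) ∉ tsupport F) : coneDAlembertian F t r θ = 0 := by
  have h' : (t, r, θ) ∉ tsupport (fderiv ℝ F) := fun hp => h (tsupport_fderiv_subset ℝ hp)
  simp [coneDAlembertian_eq_fderiv hF, fderiv_of_notMem_tsupport ℝ h,
    fderiv_of_notMem_tsupport ℝ h']

lemma radialFlux_eq_zero_of_notMem_tsupport (h : (r, r, θ) ∉ tsupport F) :
    radialFlux g F (θ, r) = 0 := by
  simp [radialFlux, fderiv_of_notMem_tsupport ℝ h, image_eq_zero_of_notMem_tsupport h]

lemma periodic_angularFlux (hg : Function.Periodic g T) (hF : Function.Periodic F (0, 0, T)) :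
    Function.Periodic (angularFlux g F) (T, 0) := fun ⟨θ, r⟩ => by
  have hg' : Function.Periodic (deriv g) T := fun θ => by
    rw [← deriv_comp_add_const, funext hg]
  have hF₀ := hF (r, r, θ)
  have hF₁ := periodic_fderiv (𝕜 := ℝ) hF (r, r, θ)
  simp only [Prod.mk_add_mk, add_zero] at hF₀ hF₁
  simp only [angularFlux, Prod.mk_add_mk, add_zero, hF₀, hF₁, hg θ, hg' θ]

lemma contDiffOn_radialFlux (hg : ContDiff ℝ 1 g) (hF : ContDiff ℝ 2 F) :
    ContDiffOn ℝ 1 (radialFlux g F) {q | 0 < q.2} := by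
  have hsqrt := contDiffOn_ofReal_sqrt_snd (n := 1)
  have hF₀ : ContDiff ℝ 1 F := hF.of_le (by norm_num)
  have hinv := (contDiffOn_const.mul hsqrt).inv fun q hq =>
    mul_ne_zero (two_ne_zero (α := ℂ)) (ofReal_sqrt_ne_zero hq)
  unfold radialFlux
  simp only [div_eq_mul_inv]
  exact ContDiffOn.mul (by fun_prop)
    ((hsqrt.mul (by fun_prop)).sub (ContDiffOn.mul (by fun_prop) hinv))

lemma contDiffOn_angularFlux (hg : ContDiff ℝ 2 g) (hF : ContDiff ℝ 2 F) :
    ContDiffOn ℝ 1 (angularFlux g F) {q | 0 < q.2} := by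
  have hsqrt := contDiffOn_ofReal_sqrt_snd (n := 1)
  have hF₀ : ContDiff ℝ 1 F := hF.of_le (by norm_num)
  have hg₀ : ContDiff ℝ 1 g := hg.of_le (by norm_num)
  have hinv := (hsqrt.pow 3).inv fun q hq => pow_ne_zero 3 (ofReal_sqrt_ne_zero hq)
  exact hinv.neg.mul (by fun_prop)

lemma deriv_radialFlux (hF : ContDiff ℝ 2 F) (hr : 0 < r) :
    deriv (fun x => radialFlux g F (θ, x)) r =
      g θ * (√r * (fderiv ℝ (fderiv ℝ F) (r, r, θ) (1, 0, 0) (1, 0, 0)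
            - fderiv ℝ (fderiv ℝ F) (r, r, θ) (0, 1, 0) (0, 1, 0))
        - fderiv ℝ F (r, r, θ) (0, 1, 0) / √r + F (r, r, θ) / (4 * (√r : ℂ) ^ 3)) := by
  have hcone : HasDerivAt (fun x => (x, x, θ)) ((1, 1, 0) : ℝ × ℝ × ℝ) r :=
    (hasDerivAt_id r).prodMk ((hasDerivAt_id r).prodMk (hasDerivAt_const r θ))
  have hne : (√r : ℂ) ≠ 0 := ofReal_sqrt_ne_zero hr
  have hsqrt := hasDerivAt_ofReal_sqrt hr.ne'
  have hF₀ : HasDerivAt (fun x => F (x, x, θ)) (fderiv ℝ F (r, r, θ) (1, 1, 0)) r :=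
    (hF.differentiable two_ne_zero _).hasFDerivAt.comp_hasDerivAt r hcone
  have hF₁ := hasDerivAt_fderiv_comp_apply hF hcone (1, -1, 0)
  have hsum : ((1, 1, 0) : ℝ × ℝ × ℝ) = (1, 0, 0) + (0, 1, 0) := by simp
  have hdiff : ((1, -1, 0) : ℝ × ℝ × ℝ) = (1, 0, 0) - (0, 1, 0) := by simp
  refine (((hsqrt.mul hF₁).sub
    (hF₀.div (hsqrt.const_mul 2) (mul_ne_zero two_ne_zero hne))).const_mul (g θ)).deriv.trans ?_
  rw [hsum, hdiff, fderiv_fderiv_add_sub hF, map_add, map_sub]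
  field_simp
  ring

lemma deriv_angularFlux (hg : ContDiff ℝ 2 g) (hF : ContDiff ℝ 2 F) :
    deriv (fun x => angularFlux g F (x, r)) θ =
      -((√r : ℂ) ^ 3)⁻¹ * (g θ * fderiv ℝ (fderiv ℝ F) (r, r, θ) (0, 0, 1) (0, 0, 1)
        - deriv (deriv g) θ * F (r, r, θ)) := by
  have hline : HasDerivAt (fun x => (r, r, x)) ((0, 0, 1) : ℝ × ℝ × ℝ) θ :=
    (hasDerivAt_const θ r).prodMk ((hasDerivAt_const θ r).prodMk (hasDerivAt_id θ))
  have hg₀ : HasDerivAt g (deriv g θ) θ := (hg.differentiable two_ne_zero θ).hasDerivAt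
  have hg₁ : HasDerivAt (deriv g) (deriv (deriv g) θ) θ :=
    (hg.differentiable_deriv_two θ).hasDerivAt
  have hF₀ : HasDerivAt (fun x => F (r, r, x)) (fderiv ℝ F (r, r, θ) (0, 0, 1)) θ :=
    (hF.differentiable two_ne_zero _).hasFDerivAt.comp_hasDerivAt θ hline
  have hF₁ := hasDerivAt_fderiv_comp_apply hF hline (0, 0, 1)
  refine (((hg₀.mul hF₁).sub (hg₁.mul hF₀)).const_mul (-((√r : ℂ) ^ 3)⁻¹)).deriv.trans ?_
  ring

lemma sqrt_mul_coneDAlembertian_eq_divergence (hg : ContDiff ℝ 2 g)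
    (hg_eigen : ∀ θ, deriv (deriv g) θ = -(g θ / 4)) (hF : ContDiff ℝ 2 F) (hr : 0 < r) :
    √r * g θ * coneDAlembertian F r r θ =
      deriv (fun x => angularFlux g F (x, r)) θ + deriv (fun x => radialFlux g F (θ, x)) r := by
  have hne : (√r : ℂ) ≠ 0 := ofReal_sqrt_ne_zero hr
  have hsq : (r : ℂ) = (√r : ℂ) ^ 2 := by exact_mod_cast (sq_sqrt hr.le).symm
  rw [coneDAlembertian_eq_fderiv hF, deriv_angularFlux hg hF, deriv_radialFlux hF hr, hg_eigen, hsq]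
  field_simp
  ring

lemma integral_Ioi_coneDAlembertian_eq_intervalIntegral {a b : ℝ} (ha : 0 ≤ a) (hab : a ≤ b)
    (hF : ContDiff ℝ 2 F) (hsupp : ∀ p ∈ tsupport F, p.2.1 ∈ Set.Ioo a b) (θ : ℝ) :
    ∫ r in Set.Ioi 0, √r * g θ * coneDAlembertian F r r θ =
      ∫ r in a..b, √r * g θ * coneDAlembertian F r r θ := by
  rw [intervalIntegral.integral_of_le hab]
  refine setIntegral_eq_of_subset_of_forall_sdiff_eq_zero measurableSet_Ioi
    (fun r hr => ha.trans_lt hr.1) fun r hr => ?_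
  have hnot : (r, r, θ) ∉ tsupport F := fun h => hr.2 (Set.Ioo_subset_Ioc_self (hsupp _ h))
  rw [coneDAlembertian_eq_zero_of_notMem_tsupport hF hnot, mul_zero]

lemma integral_divergence_flux_eq_zero {a b : ℝ} (ha : 0 < a) (hab : a ≤ b) (hg : ContDiff ℝ 2 g)
    (hg_per : Function.Periodic g T) (hF : ContDiff ℝ 2 F)
    (hF_per : Function.Periodic F (0, 0, T)) (hsupp : ∀ p ∈ tsupport F, p.2.1 ∈ Set.Ioo a b) :
    ∫ θ in 0..T, ∫ r in a..b,
      deriv (fun x => angularFlux g F (x, r)) θ + deriv (fun x => radialFlux g F (θ, x)) r = 0 := by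
  have hopen : IsOpen {q : ℝ × ℝ | 0 < q.2} := isOpen_lt continuous_const continuous_snd
  have hsub : Set.uIcc 0 T ×ˢ Set.uIcc a b ⊆ {q : ℝ × ℝ | 0 < q.2} := fun q hq => by
    rw [Set.uIcc_of_le hab] at hq
    exact ha.trans_le hq.2.1
  have hradial (r) (hr : r ∉ Set.Ioo a b) (θ) : radialFlux g F (θ, r) = 0 :=
    radialFlux_eq_zero_of_notMem_tsupport fun h => hr (hsupp _ h)
  have hangular (r) : angularFlux g F (T, r) = angularFlux g F (0, r) := by
    simpa using periodic_angularFlux hg_per hF_per (0, r)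
  rw [integral_divergence_rectangle_of_contDiffOn hopen (contDiffOn_angularFlux hg hF)
    (contDiffOn_radialFlux (hg.of_le (by norm_num)) hF) hsub]
  simp [hradial a (by simp), hradial b (by simp), hangular]

end Cone

/-- A function `g(θ)` on the circle `ℝ / Tℤ` with `∂_θ² g = -g / 4`, i.e. an angular eigenfunction
of the order `1/2` at which a wave on the cone of angle `T` can be supported on the light cone
alone. -/
structure IsHalfOrderMode (T : ℝ) (g : ℝ → ℂ) : Prop where
  contDiff : ContDiff ℝ 2 g
  deriv_deriv (θ : ℝ) : deriv (deriv g) θ = -(g θ / 4)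
  periodic : Function.Periodic g T

/-- The angular mode `e^{iεθ/2}`; it is a function on the cone of angle `4π` when `ε` is an
integer. -/
noncomputable def angularMode (ε θ : ℝ) : ℂ :=
  Complex.exp (Complex.I * (ε : ℂ) * (θ : ℂ) / 2)

lemma contDiff_angularMode (ε : ℝ) {n : WithTop ℕ∞} : ContDiff ℝ n (angularMode ε) := by
  have : ContDiff ℝ n ((↑) : ℝ → ℂ) := Complex.ofRealCLM.contDiff
  unfold angularMode
  fun_prop

lemma deriv_angularMode (ε : ℝ) :
    deriv (angularMode ε) = fun θ => Complex.I * ε / 2 * angularMode ε θ := by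
  funext θ
  have hphase : HasDerivAt (fun x : ℝ => Complex.I * ε * (x : ℂ) / 2) (Complex.I * ε * 1 / 2) θ :=
    ((hasDerivAt_id θ).ofReal_comp.const_mul _).div_const 2
  rw [mul_one] at hphase
  exact hphase.cexp.deriv.trans (mul_comm _ _)

lemma deriv_deriv_angularMode (ε θ : ℝ) :
    deriv (deriv (angularMode ε)) θ = -(ε ^ 2 * angularMode ε θ / 4) := by
  rw [deriv_angularMode, deriv_const_mul_field, deriv_angularMode]
  linear_combination (ε ^ 2 * angularMode ε θ / 4) * Complex.I_sq

lemma periodic_angularMode (n : ℤ) : Function.Periodic (angularMode n) (4 * π) := fun θ =>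
  Complex.exp_eq_exp_iff_exists_int.2 ⟨n, by push_cast; ring⟩

lemma isHalfOrderMode_angularMode {ε : ℝ} (hε : ε = 1 ∨ ε = -1) :
    IsHalfOrderMode (4 * π) (angularMode ε) where
  contDiff := contDiff_angularMode ε
  deriv_deriv θ := by rcases hε with rfl | rfl <;> simp [deriv_deriv_angularMode]
  periodic := by
    rcases hε with rfl | rfl
    · exact_mod_cast periodic_angularMode 1
    · exact_mod_cast periodic_angularMode (-1)

theorem sharp_huygens_cone_4pi_general {T : ℝ} {g : ℝ → ℂ} {F : ℝ × ℝ × ℝ → ℂ} {K : Set ℝ}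
    (hg : IsHalfOrderMode T g) (hF : ContDiff ℝ 2 F)
    (hF_per : ∀ t r θ, F (t, r, θ + T) = F (t, r, θ)) (hK : IsCompact K) (hK_pos : K ⊆ Set.Ioi 0)
    (hF_supp : ∀ t r θ, r ∉ K → F (t, r, θ) = 0) :
    ∫ θ in 0..T, ∫ r in Set.Ioi 0, √r * g θ * coneDAlembertian F r r θ = 0 := by
  obtain ⟨a, b, ha, hab, hKab⟩ := exists_subset_Ioo_of_isCompact hK hK_pos
  have hsupport : Function.support F ⊆ {p | p.2.1 ∈ K} :=
    fun p hp => by_contra fun hpK => hp (hF_supp _ _ _ hpK)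
  have hclosed : IsClosed {p : ℝ × ℝ × ℝ | p.2.1 ∈ K} :=
    hK.isClosed.preimage (continuous_fst.comp continuous_snd)
  have hsupp : ∀ p ∈ tsupport F, p.2.1 ∈ Set.Ioo a b :=
    fun p hp => hKab (closure_minimal hsupport hclosed hp)
  have hperiodic : Function.Periodic F (0, 0, T) := fun ⟨t, r, θ⟩ => by simpa using hF_per t r θ
  simp only [integral_Ioi_coneDAlembertian_eq_intervalIntegral ha.le hab.le hF hsupp]
  rw [← integral_divergence_flux_eq_zero ha hab.le hg.contDiff hg.periodic hF hperiodic hsupp]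
  refine intervalIntegral.integral_congr fun θ _ => intervalIntegral.integral_congr fun r hr => ?_
  rw [Set.uIcc_of_le hab.le] at hr
  exact sqrt_mul_coneDAlembertian_eq_divergence hg.contDiff hg.deriv_deriv hF (ha.trans_le hr.1)

/-- Sharp Huygens principle on the cone of angle `4π`: the distribution
`u = r^{-1/2} e^{iεθ/2} δ(t - r)` (ε = ±1), supported exactly on the light cone
`{t = r}`, solves the wave equation `(∂_t² - Δ)u = 0` distributionally, i.e. for
every test function `φ` on `ℝ_t × C°_{4π}` (smooth, `4π`-periodic in `θ`, with
`(t,r)`-support in a compact subset of `ℝ × (0,∞)`) one has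
`∫₀^{4π} ∫₀^∞ √r e^{iεθ/2} (∂_t²φ - ∂_r²φ - r⁻¹∂_rφ - r⁻²∂_θ²φ)(r,r,θ) dr dθ = 0`. -/
theorem sharp_huygens_cone_4pi (ε : ℝ) (hε : ε = 1 ∨ ε = -1)
    (φ : ℝ → ℝ → ℝ → ℂ)
    (hsmooth : ContDiff ℝ (⊤ : ℕ∞) (fun p : ℝ × ℝ × ℝ => φ p.1 p.2.1 p.2.2))
    (hper : ∀ t r θ : ℝ, φ t r (θ + 4 * π) = φ t r θ)
    (hsupp : ∃ K : Set (ℝ × ℝ), IsCompact K ∧ K ⊆ {p : ℝ × ℝ | 0 < p.2} ∧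
      ∀ t r θ : ℝ, (t, r) ∉ K → φ t r θ = 0) :
    ∫ θ in (0:ℝ)..(4 * π), ∫ r in Set.Ioi (0:ℝ),
      (Real.sqrt r : ℂ) * Complex.exp (Complex.I * (ε : ℂ) * (θ : ℂ) / 2) *
        (deriv (deriv (fun t : ℝ => φ t r θ)) r
          - deriv (deriv (fun x : ℝ => φ r x θ)) r
          - (r : ℂ)⁻¹ * deriv (fun x : ℝ => φ r x θ) r
          - ((r : ℂ) ^ 2)⁻¹ * deriv (deriv (fun y : ℝ => φ r r y)) θ) = 0 := by
  obtain ⟨K, hK, hK_pos, hφ_supp⟩ := hsupp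
  exact sharp_huygens_cone_4pi_general (F := fun p => φ p.1 p.2.1 p.2.2)
    (isHalfOrderMode_angularMode hε) (hsmooth.of_le (by norm_cast)) hper (hK.image continuous_snd)
    (Set.image_subset_iff.2 hK_pos) fun t r θ hr => hφ_supp t r θ fun h => hr ⟨(t, r), h, rfl⟩
end

section
/- Let ν ≥ 1 be a real number and let u : (0,∞) → ℂ be twice continuously differentiable and satisfy the modified Bessel equation s²u''(s) + su'(s) − (s² + ν²)u(s) = 0 for all s > 0. If ∫_0^∞ |u(s)|² s ds < ∞, then u(s) = 0 for all s > 0. -/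
open Real Filter Topology MeasureTheory

/-!
In terms of the Euler operator `θ = s d/ds` the equation reads `θ²u = q u` with `q = s² + ν² ≥ 1`.
Testing against a norming functional at a given point `b` reduces to a real solution with
`u b > 0`. Since `θ(u θu) = (θu)² + q u² ≥ 0`, the product `u θu` is monotone. If it is nonnegative
at `b`, then `u²` increases on `[b, ∞)`. If it is negative at `b`, then it is negative on `(0, b]`,
so `u` cannot vanish there and stays positive. As `q ≥ 1`, the Wronskian `s (u - θu)` of `u` and
the solution `s` of `θ²w = w` is then antitone on `(0, b]`, and integrating
`(u / s)' = -s (u - θu) / s³` yields `u ≥ b u(b) / (2 s)`. In both cases `|u|² s` fails to be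
integrable, at infinity or at the origin.
-/

section Monotonicity

variable {D : Set ℝ} {f f' : ℝ → ℝ}

lemma monotoneOn_of_hasDerivAt_nonneg (hD : Convex ℝ D)
    (hf : ∀ x ∈ D, HasDerivAt f (f' x) x) (hf' : ∀ x ∈ D, 0 ≤ f' x) : MonotoneOn f D :=
  monotoneOn_of_hasDerivWithinAt_nonneg hD (HasDerivAt.continuousOn hf)
    (fun x hx ↦ (hf x (interior_subset hx)).hasDerivWithinAt)
    (fun x hx ↦ hf' x (interior_subset hx))

lemma antitoneOn_of_hasDerivAt_nonpos (hD : Convex ℝ D)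
    (hf : ∀ x ∈ D, HasDerivAt f (f' x) x) (hf' : ∀ x ∈ D, f' x ≤ 0) : AntitoneOn f D :=
  antitoneOn_of_hasDerivWithinAt_nonpos hD (HasDerivAt.continuousOn hf)
    (fun x hx ↦ (hf x (interior_subset hx)).hasDerivWithinAt)
    (fun x hx ↦ hf' x (interior_subset hx))

end Monotonicity

section NonIntegrability

lemma not_integrableOn_of_const_le {α : Type*} [MeasurableSpace α] {μ : Measure α} {S : Set α}
    {f : α → ℝ} {c : ℝ} (hS : MeasurableSet S) (hμS : μ S = ⊤) (hc : 0 < c)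
    (hf : ∀ x ∈ S, c ≤ f x) : ¬ IntegrableOn f S μ := by
  intro hfint
  have hconst : IntegrableOn (fun _ ↦ c) S μ :=
    hfint.mono' aestronglyMeasurable_const <| ae_restrict_of_forall_mem hS fun x hx ↦
      (Real.norm_of_nonneg hc.le).trans_le (hf x hx)
  simp [integrableOn_const_iff, hμS, hc.ne'] at hconst

lemma not_integrableOn_Ioc_of_div_le {f : ℝ → ℝ} {b c : ℝ} (hb : 0 < b) (hc : 0 < c)
    (hf : ∀ s ∈ Set.Ioc 0 b, c / s ≤ f s) : ¬ IntegrableOn f (Set.Ioc 0 b) := by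
  intro hfint
  have hinv : IntegrableOn (fun s : ℝ ↦ s⁻¹) (Set.Ioc 0 b) := by
    refine (hfint.const_mul c⁻¹).mono' (by fun_prop) <|
      ae_restrict_of_forall_mem measurableSet_Ioc fun s hs ↦ ?_
    calc ‖s⁻¹‖ = c⁻¹ * (c / s) := by
          rw [Real.norm_of_nonneg (inv_nonneg.2 hs.1.le)]
          field_simp
      _ ≤ c⁻¹ * f s := by gcongr; exact hf s hs
  rw [← intervalIntegrable_iff_integrableOn_Ioc_of_le hb.le, intervalIntegrable_inv_iff] at hinv
  simp [hb.ne, hb.le] at hinv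

end NonIntegrability

/-- The equation `θ²u = q u` on `(0, ∞)` for the Euler operator `θ = s d/ds`, written as the
first-order system `θu = v`, `θv = q u` for the pair `(u, v)`. The modified Bessel equation of
order `ν` is the case `q s = s² + ν²`. -/
structure IsEulerSolution {E : Type*} [NormedAddCommGroup E] [NormedSpace ℝ E]
    (q : ℝ → ℝ) (u v : ℝ → E) : Prop where
  hasDerivAt_fst : ∀ s, 0 < s → HasDerivAt u (s⁻¹ • v s) s
  hasDerivAt_snd : ∀ s, 0 < s → HasDerivAt v ((s⁻¹ * q s) • u s) s

namespace IsEulerSolution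

section Real

variable {q u v : ℝ → ℝ} {b : ℝ}

lemma monotoneOn_mul (h : IsEulerSolution q u v) (hq : ∀ s, 0 < s → 0 ≤ q s) :
    MonotoneOn (fun s ↦ u s * v s) (Set.Ioi 0) := by
  refine monotoneOn_of_hasDerivAt_nonneg (f' := fun s ↦ s⁻¹ * (v s ^ 2 + q s * u s ^ 2))
    (convex_Ioi 0) (fun s hs ↦ ?_) (fun s hs ↦ ?_)
  · refine ((h.hasDerivAt_fst s hs).mul (h.hasDerivAt_snd s hs)).congr_deriv ?_
    simp only [smul_eq_mul]
    ring
  · have hs_pos : 0 < s := hs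
    have hqs := hq s hs
    positivity

lemma monotoneOn_sq (h : IsEulerSolution q u v) (hq : ∀ s, 0 < s → 0 ≤ q s) (hb : 0 < b)
    (huv : 0 ≤ u b * v b) : MonotoneOn (fun s ↦ u s ^ 2) (Set.Ici b) := by
  refine monotoneOn_of_hasDerivAt_nonneg (f' := fun s ↦ 2 * s⁻¹ * (u s * v s))
    (convex_Ici b) (fun s hs ↦ ?_) (fun s hs ↦ ?_)
  · refine ((h.hasDerivAt_fst s (hb.trans_le hs)).pow 2).congr_deriv ?_
    simp only [smul_eq_mul]
    ring
  · have hs_pos : 0 < s := hb.trans_le hs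
    have huv_s : 0 ≤ u s * v s := huv.trans (h.monotoneOn_mul hq hb hs_pos hs)
    positivity

lemma pos_of_mem_Ioc (h : IsEulerSolution q u v) (hq : ∀ s, 0 < s → 0 ≤ q s)
    (hub : 0 < u b) (hvb : v b < 0) {s : ℝ} (hs : s ∈ Set.Ioc 0 b) : 0 < u s := by
  have huv : ∀ t ∈ Set.Ioc 0 b, u t * v t < 0 := fun t ht ↦
    (h.monotoneOn_mul hq ht.1 (ht.1.trans_le ht.2) ht.2).trans_lt (mul_neg_of_pos_of_neg hub hvb)
  have hcont : ContinuousOn u (Set.Icc s b) :=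
    HasDerivAt.continuousOn fun t ht ↦ h.hasDerivAt_fst t (hs.1.trans_le ht.1)
  by_contra! hus
  obtain ⟨t, ht, hut⟩ := intermediate_value_Icc hs.2 hcont ⟨hus, hub.le⟩
  simpa [hut] using huv t ⟨hs.1.trans_le ht.1, ht.2⟩

lemma antitoneOn_mul_sub {D : Set ℝ} (h : IsEulerSolution q u v) (hD : Convex ℝ D)
    (hD_pos : ∀ s ∈ D, 0 < s) (hq : ∀ s ∈ D, 1 ≤ q s) (hu : ∀ s ∈ D, 0 ≤ u s) :
    AntitoneOn (fun s ↦ s * (u s - v s)) D := by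
  refine antitoneOn_of_hasDerivAt_nonpos (f' := fun s ↦ (1 - q s) * u s)
    hD (fun s hs ↦ ?_) (fun s hs ↦ ?_)
  · have hs_pos := hD_pos s hs
    refine ((hasDerivAt_id' s).mul
      ((h.hasDerivAt_fst s hs_pos).sub (h.hasDerivAt_snd s hs_pos))).congr_deriv ?_
    simp only [Pi.sub_apply, smul_eq_mul]
    field_simp
    ring
  · exact mul_nonpos_of_nonpos_of_nonneg (sub_nonpos.2 (hq s hs)) (hu s hs)

lemma antitoneOn_div_sub_div_sq {D : Set ℝ} {c : ℝ} (h : IsEulerSolution q u v) (hD : Convex ℝ D)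
    (hD_pos : ∀ s ∈ D, 0 < s) (hc : ∀ s ∈ D, c ≤ s * (u s - v s)) :
    AntitoneOn (fun s ↦ u s / s - c / 2 / s ^ 2) D := by
  refine antitoneOn_of_hasDerivAt_nonpos (f' := fun s ↦ (c - s * (u s - v s)) / s ^ 3)
    hD (fun s hs ↦ ?_) (fun s hs ↦ ?_)
  · have hs_pos := hD_pos s hs
    refine (((h.hasDerivAt_fst s hs_pos).div (hasDerivAt_id' s) hs_pos.ne').sub
      ((hasDerivAt_const s (c / 2)).div (hasDerivAt_pow 2 s) (by positivity))).congr_deriv ?_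
    simp only [smul_eq_mul]
    field_simp
    ring
  · exact div_nonpos_of_nonpos_of_nonneg (sub_nonpos.2 (hc s hs)) (pow_nonneg (hD_pos s hs).le 3)

lemma mul_div_two_div_le_of_mem_Ioc (h : IsEulerSolution q u v) (hq : ∀ s, 0 < s → 1 ≤ q s)
    (hub : 0 < u b) (hvb : v b < 0) {s : ℝ} (hs : s ∈ Set.Ioc 0 b) :
    b * u b / 2 / s ≤ u s := by
  have hb : 0 < b := hs.1.trans_le hs.2
  have hb_mem : b ∈ Set.Ioc 0 b := ⟨hb, le_rfl⟩
  have hu : ∀ t ∈ Set.Ioc 0 b, 0 ≤ u t := fun t ht ↦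
    (h.pos_of_mem_Ioc (fun r hr ↦ zero_le_one.trans (hq r hr)) hub hvb ht).le
  have hwronskian : ∀ t ∈ Set.Ioc 0 b, b * u b ≤ t * (u t - v t) := fun t ht ↦
    calc b * u b ≤ b * (u b - v b) := by gcongr; linarith
      _ ≤ t * (u t - v t) := h.antitoneOn_mul_sub (convex_Ioc 0 b) (fun r hr ↦ hr.1)
        (fun r hr ↦ hq r hr.1) hu ht hb_mem ht.2
  have hdiff : 0 ≤ u s / s - b * u b / 2 / s ^ 2 :=
    calc 0 ≤ u b / (2 * b) := by positivity
      _ = u b / b - b * u b / 2 / b ^ 2 := by field_simp; ring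
      _ ≤ u s / s - b * u b / 2 / s ^ 2 := h.antitoneOn_div_sub_div_sq (convex_Ioc 0 b)
        (fun r hr ↦ hr.1) hwronskian hs hb_mem hs.2
  calc b * u b / 2 / s = s * (b * u b / 2 / s ^ 2) := by have := hs.1; field_simp
    _ ≤ s * (u s / s) := mul_le_mul_of_nonneg_left (sub_nonneg.1 hdiff) hs.1.le
    _ = u s := mul_div_cancel₀ _ hs.1.ne'

lemma abs_le_abs_or_div_le_abs (h : IsEulerSolution q u v) (hq : ∀ s, 0 < s → 1 ≤ q s)
    (hb : 0 < b) (hub : 0 < u b) :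
    (∀ s ∈ Set.Ioi b, |u b| ≤ |u s|) ∨ ∀ s ∈ Set.Ioc 0 b, b * |u b| / 2 / s ≤ |u s| := by
  rcases le_or_gt 0 (v b) with hvb | hvb
  · have hmono := h.monotoneOn_sq (fun s hs ↦ zero_le_one.trans (hq s hs)) hb
      (mul_nonneg hub.le hvb)
    exact .inl fun s hs ↦
      sq_le_sq.1 (hmono Set.self_mem_Ici (Set.Ioi_subset_Ici_self hs) (le_of_lt hs))
  · refine .inr fun s hs ↦ ?_
    rw [abs_of_pos hub]
    exact (h.mul_div_two_div_le_of_mem_Ioc hq hub hvb hs).trans (le_abs_self _)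

end Real

variable {E : Type*} [NormedAddCommGroup E] [NormedSpace ℝ E] {q : ℝ → ℝ} {u v : ℝ → E} {b : ℝ}

lemma of_deriv (hu : DifferentiableOn ℝ u (Set.Ioi 0))
    (hu' : DifferentiableOn ℝ (deriv u) (Set.Ioi 0))
    (heq : ∀ s ∈ Set.Ioi (0 : ℝ), s ^ 2 • deriv (deriv u) s + s • deriv u s = q s • u s) :
    IsEulerSolution q u (fun s ↦ s • deriv u s) where
  hasDerivAt_fst s hs := by
    rw [inv_smul_smul₀ hs.ne']
    exact (hu.differentiableAt (Ioi_mem_nhds hs)).hasDerivAt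
  hasDerivAt_snd s hs := by
    refine ((hasDerivAt_id' s).smul
      (hu'.differentiableAt (Ioi_mem_nhds hs)).hasDerivAt).congr_deriv ?_
    rw [mul_smul, eq_inv_smul_iff₀ hs.ne', ← heq s hs]
    module

lemma continuousLinearMap_comp {F : Type*} [NormedAddCommGroup F] [NormedSpace ℝ F]
    (h : IsEulerSolution q u v) (g : E →L[ℝ] F) : IsEulerSolution q (g ∘ u) (g ∘ v) where
  hasDerivAt_fst s hs := by
    simpa only [map_smul, Function.comp_apply] using
      g.hasFDerivAt.comp_hasDerivAt s (h.hasDerivAt_fst s hs)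
  hasDerivAt_snd s hs := by
    simpa only [map_smul, Function.comp_apply] using
      g.hasFDerivAt.comp_hasDerivAt s (h.hasDerivAt_snd s hs)

lemma norm_le_norm_or_div_le_norm (h : IsEulerSolution q u v) (hq : ∀ s, 0 < s → 1 ≤ q s)
    (hb : 0 < b) (hub : u b ≠ 0) :
    (∀ s ∈ Set.Ioi b, ‖u b‖ ≤ ‖u s‖) ∨ ∀ s ∈ Set.Ioc 0 b, b * ‖u b‖ / 2 / s ≤ ‖u s‖ := by
  obtain ⟨g, hg_norm, hg_eq⟩ := exists_dual_vector ℝ (u b) (norm_ne_zero_iff.2 hub)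
  replace hg_eq : g (u b) = ‖u b‖ := hg_eq
  have hg_le : ∀ s, |g (u s)| ≤ ‖u s‖ := fun s ↦ by
    simpa only [hg_norm, one_mul, Real.norm_eq_abs] using g.le_opNorm (u s)
  have hg_abs : |g (u b)| = ‖u b‖ := by rw [hg_eq, abs_norm]
  have hg_pos : 0 < g (u b) := hg_eq ▸ norm_pos_iff.2 hub
  rw [← hg_abs]
  exact ((h.continuousLinearMap_comp g).abs_le_abs_or_div_le_abs hq hb hg_pos).imp
    (fun hgrow s hs ↦ (hgrow s hs).trans (hg_le s))
    (fun hblow s hs ↦ (hblow s hs).trans (hg_le s))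

lemma eq_zero_of_integrableOn (h : IsEulerSolution q u v) (hq : ∀ s, 0 < s → 1 ≤ q s)
    (hint : IntegrableOn (fun s ↦ ‖u s‖ ^ 2 * s) (Set.Ioi 0)) (hb : 0 < b) : u b = 0 := by
  by_contra hub
  rcases h.norm_le_norm_or_div_le_norm hq hb hub with hgrow | hblow
  · refine not_integrableOn_of_const_le (c := ‖u b‖ ^ 2 * b) measurableSet_Ioi Real.volume_Ioi
      (by positivity) (fun s hs ↦ ?_) (hint.mono_set (Set.Ioi_subset_Ioi hb.le))
    gcongr
    exacts [hgrow s hs, le_of_lt hs]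
  · refine not_integrableOn_Ioc_of_div_le (c := (b * ‖u b‖ / 2) ^ 2) hb
      (by positivity) (fun s hs ↦ ?_) (hint.mono_set Set.Ioc_subset_Ioi_self)
    have hs_pos : 0 < s := hs.1
    calc (b * ‖u b‖ / 2) ^ 2 / s = (b * ‖u b‖ / 2 / s) ^ 2 * s := by field_simp
      _ ≤ ‖u s‖ ^ 2 * s := by gcongr; exact hblow s hs

end IsEulerSolution

theorem modified_bessel_L2_trivial_of_one_le_order_general {E : Type*} [NormedAddCommGroup E]
    [NormedSpace ℝ E] (q : ℝ → ℝ) (hq : ∀ s ∈ Set.Ioi (0 : ℝ), 1 ≤ q s) (u : ℝ → E)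
    (hu : DifferentiableOn ℝ u (Set.Ioi 0)) (hu' : DifferentiableOn ℝ (deriv u) (Set.Ioi 0))
    (heq : ∀ s ∈ Set.Ioi (0 : ℝ), s ^ 2 • deriv (deriv u) s + s • deriv u s = q s • u s)
    (hint : IntegrableOn (fun s : ℝ ↦ ‖u s‖ ^ 2 * s) (Set.Ioi 0)) :
    ∀ s ∈ Set.Ioi (0 : ℝ), u s = 0 :=
  fun _ hs ↦ (IsEulerSolution.of_deriv hu hu' heq).eq_zero_of_integrableOn hq hint hs

/-- For `ν ≥ 1`, any twice continuously differentiable solution on `(0,∞)` of the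
modified Bessel equation `s²u'' + su' - (s² + ν²)u = 0` that lies in
`L²((0,∞), s ds)` vanishes identically. -/
theorem modified_bessel_L2_trivial_of_one_le_order (ν : ℝ) (hν : 1 ≤ ν) (u : ℝ → ℂ)
    (hu : ContDiffOn ℝ 2 u (Set.Ioi 0))
    (heq : ∀ s ∈ Set.Ioi (0:ℝ),
      (s : ℂ) ^ 2 * deriv (deriv u) s + (s : ℂ) * deriv u s
        - ((s : ℂ) ^ 2 + (ν : ℂ) ^ 2) * u s = 0)
    (hint : IntegrableOn (fun s : ℝ => ‖u s‖ ^ 2 * s) (Set.Ioi 0)) :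
    ∀ s ∈ Set.Ioi (0:ℝ), u s = 0 :=
  modified_bessel_L2_trivial_of_one_le_order_general (fun s ↦ s ^ 2 + ν ^ 2)
    (fun s _ ↦ by nlinarith [sq_nonneg s]) u (hu.differentiableOn two_ne_zero)
    ((hu.deriv_of_isOpen (m := 1) isOpen_Ioi (by norm_num)).differentiableOn one_ne_zero)
    (fun s hs ↦ by simpa [Complex.real_smul] using sub_eq_zero.1 (heq s hs)) hint
end

section
/- Let u, v : (0,∞) → ℂ be twice continuously differentiable solutions of the modified Bessel equation of order 0, i.e. s²w''(s) + sw'(s) − s²w(s) = 0 for all s > 0, and suppose ∫_0^∞ |u(s)|² s ds < ∞ and ∫_0^∞ |v(s)|² s ds < ∞. Then u and v are linearly dependent: there exist (a,b) ∈ ℂ² with (a,b) ≠ (0,0) and a·u(s) + b·v(s) = 0 for all s > 0. (The space of L²((0,∞), s ds) solutions of the order-zero modified Bessel equation is at most one-dimensional; it is spanned by K_0.) -/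
open Real Filter Topology MeasureTheory

/-! In quasi-derivative form `w' = r y`, `y' = q w` with `r, q ≥ 0`, the modified Bessel equation
has `r = 1 / s` and `q = s + ν² / s`. Since `⟪w, y⟫' = q ‖w‖² + r ‖y‖² ≥ 0` and
`(‖w‖²)' = 2 r ⟪w, y⟫`, a solution vanishing at `c` has `‖w‖` nondecreasing on `[c, ∞)`. As `s ds`
has infinite mass at infinity, such a solution is square integrable there only if it vanishes on
`[c, ∞)`. Applied to `w = v(c) u - u(c) v`, this gives `v(c) u(s) = u(c) v(s)` for `c ≤ s`, and by
symmetry for all `c` and `s`. -/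

lemma nonpos_of_monotoneOn_of_mul_le_integrableAtFilter {f ρ G : ℝ → ℝ} {c : ℝ}
    (hf : MonotoneOn f (Set.Ici c)) (hρ₀ : ∀ᶠ t in atTop, 0 ≤ ρ t)
    (hρm : StronglyMeasurableAtFilter ρ atTop) (hρ : ¬ IntegrableAtFilter ρ atTop)
    (hG : IntegrableAtFilter G atTop) (hfG : ∀ᶠ t in atTop, f t * ρ t ≤ G t)
    {s : ℝ} (hs : c ≤ s) : f s ≤ 0 := by
  by_contra! hfs
  refine hρ (Asymptotics.IsBigO.integrableAtFilter (.of_bound (f s)⁻¹ ?_) hρm hG)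
  filter_upwards [hρ₀, hfG, eventually_ge_atTop s] with t hρt hfGt hst
  rw [Real.norm_of_nonneg hρt, inv_mul_eq_div, le_div_iff₀' hfs]
  calc f s * ρ t ≤ f t * ρ t := by gcongr; exact hf hs (hs.trans hst) hst
    _ ≤ G t := hfGt
    _ ≤ ‖G t‖ := le_norm_self _

lemma norm_sub_sq_le_two_mul {E : Type*} [SeminormedAddCommGroup E] (x y : E) :
    ‖x - y‖ ^ 2 ≤ 2 * (‖x‖ ^ 2 + ‖y‖ ^ 2) :=
  calc ‖x - y‖ ^ 2 ≤ (‖x‖ + ‖y‖) ^ 2 := by gcongr; exact norm_sub_le x y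
    _ ≤ 2 * (‖x‖ ^ 2 + ‖y‖ ^ 2) := add_sq_le

lemma not_integrableAtFilter_id_atTop : ¬ IntegrableAtFilter (fun s : ℝ ↦ s) atTop := by
  have h := (integrableAtFilter_rpow_atTop_iff (s := 1)).not.mpr (by norm_num)
  simpa only [rpow_one] using h

lemma exists_ne_zero_mul_add_mul_eq_zero_of_mul_eq_mul {α R : Type*} [CommRing R] [Nontrivial R]
    {S : Set α} {u v : α → R} (h : ∀ c ∈ S, ∀ s ∈ S, v c * u s = u c * v s) :
    ∃ a b : R, (a, b) ≠ (0, 0) ∧ ∀ s ∈ S, a * u s + b * v s = 0 := by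
  by_cases hu : ∀ s ∈ S, u s = 0
  · exact ⟨1, 0, by simp, fun s hs ↦ by simp [hu s hs]⟩
  · push Not at hu
    obtain ⟨c, hc, huc⟩ := hu
    exact ⟨v c, -u c, by simp [huc], fun s hs ↦ by rw [h c hc s hs]; ring⟩

/-- `w` solves the Sturm–Liouville equation `(p w')' = q w` on `S`, in first-order form: `r` is
`1 / p` and `y` is the quasi-derivative `p w'`. Working with `r` and `y` avoids dividing by `p`. -/
structure IsSturmLiouvilleSolution {E : Type*} [NormedAddCommGroup E] [NormedSpace ℝ E]
    (r q : ℝ → ℝ) (S : Set ℝ) (w y : ℝ → E) : Prop where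
  hasDerivAt : ∀ s ∈ S, HasDerivAt w (r s • y s) s
  hasDerivAt_quasiDeriv : ∀ s ∈ S, HasDerivAt y (q s • w s) s

namespace IsSturmLiouvilleSolution

variable {r q : ℝ → ℝ} {S : Set ℝ}

lemma sub {E : Type*} [NormedAddCommGroup E] [NormedSpace ℝ E] {w₁ y₁ w₂ y₂ : ℝ → E}
    (h₁ : IsSturmLiouvilleSolution r q S w₁ y₁)
    (h₂ : IsSturmLiouvilleSolution r q S w₂ y₂) :
    IsSturmLiouvilleSolution r q S (fun s ↦ w₁ s - w₂ s) (fun s ↦ y₁ s - y₂ s) where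
  hasDerivAt s hs := by
    simpa only [smul_sub] using (h₁.hasDerivAt s hs).fun_sub (h₂.hasDerivAt s hs)
  hasDerivAt_quasiDeriv s hs := by
    simpa only [smul_sub] using
      (h₁.hasDerivAt_quasiDeriv s hs).fun_sub (h₂.hasDerivAt_quasiDeriv s hs)

lemma const_mul {A : Type*} [NormedRing A] [NormedAlgebra ℝ A] {w y : ℝ → A}
    (h : IsSturmLiouvilleSolution r q S w y) (a : A) :
    IsSturmLiouvilleSolution r q S (fun s ↦ a * w s) (fun s ↦ a * y s) where
  hasDerivAt s hs := by
    simpa only [mul_smul_comm] using (h.hasDerivAt s hs).const_mul a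
  hasDerivAt_quasiDeriv s hs := by
    simpa only [mul_smul_comm] using (h.hasDerivAt_quasiDeriv s hs).const_mul a

variable {E : Type*} [NormedAddCommGroup E] [InnerProductSpace ℝ E] {w y : ℝ → E}

lemma hasDerivAt_inner (h : IsSturmLiouvilleSolution r q S w y) {s : ℝ} (hs : s ∈ S) :
    HasDerivAt (fun t ↦ inner ℝ (w t) (y t)) (q s * ‖w s‖ ^ 2 + r s * ‖y s‖ ^ 2) s := by
  refine ((h.hasDerivAt s hs).inner ℝ (h.hasDerivAt_quasiDeriv s hs)).congr_deriv ?_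
  simp only [real_inner_smul_left, real_inner_smul_right, real_inner_self_eq_norm_sq]

lemma hasDerivAt_norm_sq (h : IsSturmLiouvilleSolution r q S w y) {s : ℝ} (hs : s ∈ S) :
    HasDerivAt (fun t ↦ ‖w t‖ ^ 2) (2 * (r s * inner ℝ (w s) (y s))) s := by
  simpa only [real_inner_smul_right] using (h.hasDerivAt s hs).norm_sq

lemma monotoneOn_inner (h : IsSturmLiouvilleSolution r q S w y) (hS : Convex ℝ S)
    (hr : ∀ s ∈ S, 0 ≤ r s) (hq : ∀ s ∈ S, 0 ≤ q s) :
    MonotoneOn (fun s ↦ inner ℝ (w s) (y s)) S := by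
  refine monotoneOn_of_hasDerivWithinAt_nonneg hS
    (fun s hs ↦ (h.hasDerivAt_inner hs).continuousAt.continuousWithinAt)
    (fun s hs ↦ (h.hasDerivAt_inner (interior_subset hs)).hasDerivWithinAt) fun s hs ↦ ?_
  have hrs := hr s (interior_subset hs)
  have hqs := hq s (interior_subset hs)
  positivity

lemma monotoneOn_norm_sq_of_eq_zero (h : IsSturmLiouvilleSolution r q S w y) (hS : Convex ℝ S)
    (hr : ∀ s ∈ S, 0 ≤ r s) (hq : ∀ s ∈ S, 0 ≤ q s) {c : ℝ} (hc : c ∈ S) (hwc : w c = 0) :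
    MonotoneOn (fun s ↦ ‖w s‖ ^ 2) (S ∩ Set.Ici c) := by
  refine monotoneOn_of_hasDerivWithinAt_nonneg (hS.inter (convex_Ici c))
    (fun s hs ↦ (h.hasDerivAt_norm_sq hs.1).continuousAt.continuousWithinAt)
    (fun s hs ↦ (h.hasDerivAt_norm_sq (interior_subset hs).1).hasDerivWithinAt) fun s hs ↦ ?_
  obtain ⟨hsS, hcs⟩ := interior_subset hs
  have inner_nonneg : 0 ≤ inner ℝ (w s) (y s) := by
    simpa only [hwc, inner_zero_left] using h.monotoneOn_inner hS hr hq hc hsS hcs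
  have hrs := hr s hsS
  positivity

variable {𝕜 : Type*} [RCLike 𝕜] {ρ : ℝ → ℝ} {a : ℝ} {u yu v yv : ℝ → 𝕜}

lemma mul_eq_mul_of_integrableAtFilter_of_le
    (hu : IsSturmLiouvilleSolution r q (Set.Ioi a) u yu)
    (hv : IsSturmLiouvilleSolution r q (Set.Ioi a) v yv)
    (hr : ∀ s ∈ Set.Ioi a, 0 ≤ r s) (hq : ∀ s ∈ Set.Ioi a, 0 ≤ q s)
    (hρ₀ : ∀ᶠ t in atTop, 0 ≤ ρ t) (hρm : StronglyMeasurableAtFilter ρ atTop)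
    (hρ : ¬ IntegrableAtFilter ρ atTop)
    (hintu : IntegrableAtFilter (fun s ↦ ‖u s‖ ^ 2 * ρ s) atTop)
    (hintv : IntegrableAtFilter (fun s ↦ ‖v s‖ ^ 2 * ρ s) atTop)
    {c s : ℝ} (hc : a < c) (hcs : c ≤ s) : v c * u s = u c * v s := by
  have hw := (hu.const_mul (v c)).sub (hv.const_mul (u c))
  have norm_sq_mono : MonotoneOn (fun t ↦ ‖v c * u t - u c * v t‖ ^ 2) (Set.Ici c) :=
    (hw.monotoneOn_norm_sq_of_eq_zero (convex_Ioi a) hr hq hc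
      (sub_eq_zero.mpr (mul_comm _ _))).mono fun t ht ↦ ⟨hc.trans_le ht, ht⟩
  have dominant_integrable :=
    (hintu.smul (2 * ‖v c‖ ^ 2)).add (hintv.smul (2 * ‖u c‖ ^ 2))
  have norm_sq_nonpos : ‖v c * u s - u c * v s‖ ^ 2 ≤ 0 := by
    refine nonpos_of_monotoneOn_of_mul_le_integrableAtFilter norm_sq_mono hρ₀ hρm hρ
      dominant_integrable ?_ hcs
    filter_upwards [hρ₀] with t hρt
    calc ‖v c * u t - u c * v t‖ ^ 2 * ρ t
        ≤ 2 * (‖v c * u t‖ ^ 2 + ‖u c * v t‖ ^ 2) * ρ t := by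
          gcongr; exact norm_sub_sq_le_two_mul _ _
      _ = 2 * ‖v c‖ ^ 2 * (‖u t‖ ^ 2 * ρ t) + 2 * ‖u c‖ ^ 2 * (‖v t‖ ^ 2 * ρ t) := by
          rw [norm_mul, norm_mul]; ring
  exact sub_eq_zero.mp (norm_eq_zero.mp (sq_nonpos_iff _ |>.mp norm_sq_nonpos))

theorem exists_ne_zero_mul_add_mul_eq_zero_of_integrableAtFilter
    (hu : IsSturmLiouvilleSolution r q (Set.Ioi a) u yu)
    (hv : IsSturmLiouvilleSolution r q (Set.Ioi a) v yv)
    (hr : ∀ s ∈ Set.Ioi a, 0 ≤ r s) (hq : ∀ s ∈ Set.Ioi a, 0 ≤ q s)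
    (hρ₀ : ∀ᶠ t in atTop, 0 ≤ ρ t) (hρm : StronglyMeasurableAtFilter ρ atTop)
    (hρ : ¬ IntegrableAtFilter ρ atTop)
    (hintu : IntegrableAtFilter (fun s ↦ ‖u s‖ ^ 2 * ρ s) atTop)
    (hintv : IntegrableAtFilter (fun s ↦ ‖v s‖ ^ 2 * ρ s) atTop) :
    ∃ α β : 𝕜, (α, β) ≠ (0, 0) ∧ ∀ s ∈ Set.Ioi a, α * u s + β * v s = 0 := by
  have cross_mul_eq {c s : ℝ} (hc : a < c) (hcs : c ≤ s) : v c * u s = u c * v s :=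
    hu.mul_eq_mul_of_integrableAtFilter_of_le hv hr hq hρ₀ hρm hρ hintu hintv hc hcs
  refine exists_ne_zero_mul_add_mul_eq_zero_of_mul_eq_mul fun c hc s hs ↦ ?_
  rcases le_total c s with hcs | hsc
  · exact cross_mul_eq hc hcs
  · rw [mul_comm, mul_comm (u c), cross_mul_eq hs hsc]

end IsSturmLiouvilleSolution

lemma isSturmLiouvilleSolution_of_modified_bessel {E : Type*} [NormedAddCommGroup E]
    [NormedSpace ℝ E] {ν : ℝ} {w : ℝ → E} (hw : ContDiffOn ℝ 2 w (Set.Ioi 0))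
    (heq : ∀ s ∈ Set.Ioi (0 : ℝ),
      s ^ 2 • deriv (deriv w) s + s • deriv w s - (s ^ 2 + ν ^ 2) • w s = 0) :
    IsSturmLiouvilleSolution (fun s ↦ s⁻¹) (fun s ↦ s + ν ^ 2 / s) (Set.Ioi 0) w
      (fun s ↦ s • deriv w s) where
  hasDerivAt s hs := by
    rw [inv_smul_smul₀ (ne_of_gt hs)]
    exact ((hw.contDiffAt (Ioi_mem_nhds hs)).differentiableAt (by norm_num)).hasDerivAt
  hasDerivAt_quasiDeriv s hs := by
    have hs₀ : s ≠ 0 := ne_of_gt hs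
    have deriv_contDiffOn : ContDiffOn ℝ 1 (deriv w) (Set.Ioi 0) :=
      hw.deriv_of_isOpen isOpen_Ioi (by norm_num)
    have hasDerivAt_deriv : HasDerivAt (deriv w) (deriv (deriv w) s) s :=
      ((deriv_contDiffOn.contDiffAt (Ioi_mem_nhds hs)).differentiableAt
        (by norm_num)).hasDerivAt
    refine ((hasDerivAt_id s).fun_smul hasDerivAt_deriv).congr_deriv ?_
    apply smul_right_injective E hs₀
    calc s • (s • deriv (deriv w) s + (1 : ℝ) • deriv w s)
        = s ^ 2 • deriv (deriv w) s + s • deriv w s := by module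
      _ = (s ^ 2 + ν ^ 2) • w s := sub_eq_zero.mp (heq s hs)
      _ = s • ((s + ν ^ 2 / s) • w s) := by rw [smul_smul]; congr 1; field_simp

theorem modified_bessel_zero_L2_solutions_dependent_general {𝕜 : Type*} [RCLike 𝕜] (ν : ℝ)
    {u v : ℝ → 𝕜} (hu : ContDiffOn ℝ 2 u (Set.Ioi 0)) (hv : ContDiffOn ℝ 2 v (Set.Ioi 0))
    (hequ : ∀ s ∈ Set.Ioi (0 : ℝ),
      s ^ 2 • deriv (deriv u) s + s • deriv u s - (s ^ 2 + ν ^ 2) • u s = 0)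
    (heqv : ∀ s ∈ Set.Ioi (0 : ℝ),
      s ^ 2 • deriv (deriv v) s + s • deriv v s - (s ^ 2 + ν ^ 2) • v s = 0)
    (hintu : IntegrableAtFilter (fun s : ℝ ↦ ‖u s‖ ^ 2 * s) atTop)
    (hintv : IntegrableAtFilter (fun s : ℝ ↦ ‖v s‖ ^ 2 * s) atTop) :
    ∃ a b : 𝕜, (a, b) ≠ (0, 0) ∧ ∀ s ∈ Set.Ioi (0 : ℝ), a * u s + b * v s = 0 := by
  have hr : ∀ s ∈ Set.Ioi (0 : ℝ), 0 ≤ s⁻¹ := fun s hs ↦ inv_nonneg.mpr (le_of_lt hs)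
  have hq : ∀ s ∈ Set.Ioi (0 : ℝ), 0 ≤ s + ν ^ 2 / s := fun s (hs : 0 < s) ↦ by positivity
  exact (isSturmLiouvilleSolution_of_modified_bessel hu hequ)
    |>.exists_ne_zero_mul_add_mul_eq_zero_of_integrableAtFilter
      (isSturmLiouvilleSolution_of_modified_bessel hv heqv) hr hq (eventually_ge_atTop 0)
      stronglyMeasurable_id.stronglyMeasurableAtFilter not_integrableAtFilter_id_atTop hintu hintv

/-- The space of `L²((0,∞), s ds)` solutions of the modified Bessel equation of order
`0`, `s²w'' + sw' - s²w = 0`, is at most one-dimensional: any two twice continuously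
differentiable square-integrable solutions are linearly dependent. -/
theorem modified_bessel_zero_L2_solutions_dependent (u v : ℝ → ℂ)
    (hu : ContDiffOn ℝ 2 u (Set.Ioi 0))
    (hv : ContDiffOn ℝ 2 v (Set.Ioi 0))
    (hequ : ∀ s ∈ Set.Ioi (0:ℝ),
      (s : ℂ) ^ 2 * deriv (deriv u) s + (s : ℂ) * deriv u s - (s : ℂ) ^ 2 * u s = 0)
    (heqv : ∀ s ∈ Set.Ioi (0:ℝ),
      (s : ℂ) ^ 2 * deriv (deriv v) s + (s : ℂ) * deriv v s - (s : ℂ) ^ 2 * v s = 0)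
    (hintu : IntegrableOn (fun s : ℝ => ‖u s‖ ^ 2 * s) (Set.Ioi 0))
    (hintv : IntegrableOn (fun s : ℝ => ‖v s‖ ^ 2 * s) (Set.Ioi 0)) :
    ∃ a b : ℂ, (a, b) ≠ (0, 0) ∧ ∀ s ∈ Set.Ioi (0:ℝ), a * u s + b * v s = 0 :=
  modified_bessel_zero_L2_solutions_dependent_general 0 hu hv (by simpa using hequ)
    (by simpa using heqv) ⟨_, Ioi_mem_atTop 0, hintu⟩ ⟨_, Ioi_mem_atTop 0, hintv⟩
end

section
/- In the configuration below, let t > 0 with t ≠ r₁ + r₂ and t ≠ D. Then the set S = {s > 0 : f(s) = t} is finite, sin θ₁(s) + sin θ₂(s) ≠ 0 for every s ∈ S, and: if x₁y₂ − x₂y₁ > 0 then S has 0 elements when t < D, exactly 2 elements when D < t < r₁ + r₂, and exactly 1 element when t > r₁ + r₂; if x₁y₂ − x₂y₁ ≤ 0 then S is empty when t < r₁ + r₂ and has exactly 1 element when t > r₁ + r₂. -/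
open Real

/-!
The derivative of `f = r₁ + r₂` is strictly increasing: each summand is the sine of an arctangent
of an increasing affine function of `s`. It vanishes at the height `m` at which the line `q₁q₂`
crosses the `y`-axis, because there `q₁ - p(m)` and `q₂ - p(m)` point in opposite directions. So
`f` strictly decreases down to `f(m) = D` and strictly increases to infinity afterwards, and the
roots of `f = t` on `s > 0` are counted by the intermediate value theorem, according to the sign of
`m`, which is that of `x₁y₂ - x₂y₁`. Since `f'` vanishes only at `m`, every root with `t ≠ D` is
simple.
-/

open Set Filter

section Valley

variable {α β : Type*} [LinearOrder β] {f : α → β} {a m : α} {t : β}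

theorem setOf_eq_eq_empty_of_strictAntiOn_Iic_of_strictMonoOn_Ici [LinearOrder α]
    (hanti : StrictAntiOn f (Iic m)) (hmono : StrictMonoOn f (Ici m)) (ht : t < f m) :
    {s | f s = t} = ∅ := by
  have min_le (s : α) : f m ≤ f s :=
    (le_total s m).elim (fun h => hanti.antitoneOn h self_mem_Iic h)
      (fun h => hmono.monotoneOn self_mem_Ici h h)
  exact eq_empty_of_forall_notMem fun s hs => (ht.trans_le (min_le s)).ne' hs

theorem finite_setOf_eq_of_strictAntiOn_Iic_of_strictMonoOn_Ici [LinearOrder α]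
    (hanti : StrictAntiOn f (Iic m)) (hmono : StrictMonoOn f (Ici m)) (t : β) :
    {s | f s = t}.Finite := by
  have left_subsingleton : {s ∈ Iic m | f s = t}.Subsingleton := fun u hu v hv =>
    hanti.injOn hu.1 hv.1 (hu.2.trans hv.2.symm)
  have right_subsingleton : {s ∈ Ici m | f s = t}.Subsingleton := fun u hu v hv =>
    hmono.injOn hu.1 hv.1 (hu.2.trans hv.2.symm)
  refine (left_subsingleton.finite.union right_subsingleton.finite).subset fun s hs => ?_
  exact (le_total s m).imp (fun h => ⟨h, hs⟩) (fun h => ⟨h, hs⟩)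

theorem setOf_lt_and_eq_eq_empty_of_strictMonoOn_Ici [LinearOrder α]
    (hmono : StrictMonoOn f (Ici a)) (ht : t ≤ f a) : {s | a < s ∧ f s = t} = ∅ :=
  eq_empty_of_forall_notMem fun _ hs =>
    (ht.trans_lt (hmono self_mem_Ici hs.1.le hs.1)).ne' hs.2

variable [ConditionallyCompleteLinearOrder α] [TopologicalSpace α] [OrderTopology α]
  [DenselyOrdered α] [TopologicalSpace β] [OrderClosedTopology β]

theorem ncard_setOf_lt_and_eq_eq_one (hanti : StrictAntiOn f (Iic m))
    (hmono : StrictMonoOn f (Ici m)) (hcont : Continuous f) (htop : Tendsto f atTop atTop)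
    (ht : f a < t) : {s | a < s ∧ f s = t}.ncard = 1 := by
  obtain ⟨b, hab, hb⟩ := intermediate_value_Ioi hcont.continuousOn htop ht
  have right_of_min {s : α} (has : a < s) (hs : f s = t) : m ≤ s := by
    by_contra! hsm
    exact (hanti (has.trans hsm).le hsm.le has).not_gt (hs ▸ ht)
  refine ncard_eq_one.2 ⟨b, eq_singleton_iff_unique_mem.2 ⟨⟨hab, hb⟩, fun s hs => ?_⟩⟩
  exact hmono.injOn (right_of_min hs.1 hs.2) (right_of_min hab hb) (hs.2.trans hb.symm)

theorem ncard_setOf_lt_and_eq_eq_two (hanti : StrictAntiOn f (Iic m))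
    (hmono : StrictMonoOn f (Ici m)) (hcont : Continuous f) (htop : Tendsto f atTop atTop)
    (ham : a ≤ m) (hmt : f m < t) (hta : t < f a) : {s | a < s ∧ f s = t}.ncard = 2 := by
  obtain ⟨b, ⟨hab, hbm⟩, hb⟩ := intermediate_value_Ioo' ham hcont.continuousOn ⟨hmt, hta⟩
  obtain ⟨c, hmc, hc⟩ := intermediate_value_Ioi hcont.continuousOn htop hmt
  refine ncard_eq_two.2 ⟨b, c, (hbm.trans hmc).ne, Subset.antisymm ?_ ?_⟩
  · rintro s ⟨-, hs⟩
    exact (le_total s m).imp (fun h => hanti.injOn h hbm.le (hs.trans hb.symm))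
      (fun h => hmono.injOn h hmc.le (hs.trans hc.symm))
  · rintro s (rfl | rfl)
    exacts [⟨hab, hb⟩, ⟨ham.trans_lt hmc, hc⟩]

end Valley

section CriticalPoint

variable {f f' : ℝ → ℝ} {m : ℝ}

theorem strictMonoOn_Ici_of_strictMono_hasDerivAt (hf : ∀ s, HasDerivAt f (f' s) s)
    (hf' : StrictMono f') (hm : f' m = 0) : StrictMonoOn f (Ici m) :=
  strictMonoOn_of_hasDerivWithinAt_pos (convex_Ici m)
    (fun s _ => (hf s).continuousAt.continuousWithinAt) (fun s _ => (hf s).hasDerivWithinAt)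
    fun _ hs => hm ▸ hf' (interior_Ici.subset hs)

theorem strictAntiOn_Iic_of_strictMono_hasDerivAt (hf : ∀ s, HasDerivAt f (f' s) s)
    (hf' : StrictMono f') (hm : f' m = 0) : StrictAntiOn f (Iic m) :=
  strictAntiOn_of_hasDerivWithinAt_neg (convex_Iic m)
    (fun s _ => (hf s).continuousAt.continuousWithinAt) (fun s _ => (hf s).hasDerivWithinAt)
    fun _ hs => hm ▸ hf' (interior_Iic.subset hs)

end CriticalPoint

/-- The distance from the point `(x, y)` to the point `(0, s)` of the vertical axis: `rᵢ(s)`. -/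
noncomputable def radius (x y s : ℝ) : ℝ := √(x ^ 2 + (y - s) ^ 2)

/-- The derivative of `radius x y` at `s`, for `x ≠ 0`. It is minus the sine of the polar angle of
`(x, y)` seen from `(0, s)`. -/
noncomputable def radiusDeriv (x y s : ℝ) : ℝ := (s - y) / radius x y s

section Radius

variable {x y s k θ : ℝ}

theorem radius_pos (hx : x ≠ 0) : 0 < radius x y s := by
  unfold radius
  positivity

theorem hasDerivAt_radius (hx : x ≠ 0) : HasDerivAt (radius x y) (radiusDeriv x y s) s := by
  have inner_deriv : HasDerivAt (fun s => x ^ 2 + (y - s) ^ 2) (2 * (s - y)) s := by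
    refine ((((hasDerivAt_id s).const_sub y).pow 2).const_add (x ^ 2)).congr_deriv ?_
    simp only [id]
    ring
  exact (inner_deriv.sqrt (by positivity)).congr_deriv (mul_div_mul_left _ _ two_ne_zero)

theorem radius_eq_abs_mul_of_sub_eq_mul (h : y - s = k * x) :
    radius x y s = |x| * √(1 + k ^ 2) := by
  rw [radius, h, show x ^ 2 + (k * x) ^ 2 = x ^ 2 * (1 + k ^ 2) by ring,
    sqrt_mul (sq_nonneg x), sqrt_sq_eq_abs]

theorem radiusDeriv_eq_sin_arctan (hx : x ≠ 0) :
    radiusDeriv x y s = sin (arctan ((s - y) / |x|)) := by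
  have slope_sq : ((y - s) / x) ^ 2 = ((s - y) / |x|) ^ 2 := by
    rw [div_pow, div_pow, sq_abs, sub_sq_comm]
  rw [radiusDeriv, radius_eq_abs_mul_of_sub_eq_mul (div_mul_cancel₀ (y - s) hx).symm, slope_sq,
    sin_arctan, div_div]

theorem strictMono_radiusDeriv (hx : x ≠ 0) : StrictMono (radiusDeriv x y) := fun u v huv => by
  simp only [radiusDeriv_eq_sin_arctan hx]
  exact sin_arctan_strictMono
    (div_lt_div_of_pos_right (sub_lt_sub_right huv y) (abs_pos.2 hx))

theorem tendsto_radius_atTop (x y : ℝ) : Tendsto (radius x y) atTop atTop := by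
  refine tendsto_atTop_mono (fun s => ?_) (tendsto_atTop_add_const_right atTop (-y) tendsto_id)
  calc s + -y ≤ |y - s| := by rw [abs_sub_comm, ← sub_eq_add_neg]; exact le_abs_self _
    _ ≤ radius x y s := abs_le_sqrt (le_add_of_nonneg_left (sq_nonneg x))

theorem radiusDeriv_eq_neg_sin (hx : x ≠ 0) (hθ : y - s = radius x y s * sin θ) :
    radiusDeriv x y s = -sin θ := by
  rw [radiusDeriv, ← neg_sub y s, hθ, neg_div, mul_div_cancel_left₀ _ (radius_pos hx).ne']

theorem radiusDeriv_of_sub_eq_mul_of_pos (hx : 0 < x) (h : y - s = k * x) :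
    radiusDeriv x y s = -(k / √(1 + k ^ 2)) := by
  rw [radiusDeriv, radius_eq_abs_mul_of_sub_eq_mul h, ← neg_sub y s, h, abs_of_pos hx, neg_div,
    mul_comm k, mul_div_mul_left _ _ hx.ne']

theorem radiusDeriv_of_sub_eq_mul_of_neg (hx : x < 0) (h : y - s = k * x) :
    radiusDeriv x y s = k / √(1 + k ^ 2) := by
  rw [radiusDeriv, radius_eq_abs_mul_of_sub_eq_mul h, ← neg_sub y s, h, abs_of_neg hx,
    mul_comm k, ← neg_mul, mul_div_mul_left _ _ (neg_pos.2 hx).ne']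

end Radius

/-- The length `f(s)` of the broken path from `(x₁, y₁)` through `(0, s)` to `(x₂, y₂)`. -/
noncomputable def pathLength (x₁ y₁ x₂ y₂ s : ℝ) : ℝ := radius x₁ y₁ s + radius x₂ y₂ s

/-- The height at which the line through `(x₁, y₁)` and `(x₂, y₂)` meets the vertical axis, for
`x₁ ≠ x₂`. -/
noncomputable def crossingHeight (x₁ y₁ x₂ y₂ : ℝ) : ℝ := (x₁ * y₂ - x₂ * y₁) / (x₁ - x₂)

section PathLength

variable {x₁ y₁ x₂ y₂ s θ₁ θ₂ : ℝ}

theorem hasDerivAt_pathLength (hx₁ : x₁ ≠ 0) (hx₂ : x₂ ≠ 0) (s : ℝ) :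
    HasDerivAt (pathLength x₁ y₁ x₂ y₂) ((radiusDeriv x₁ y₁ + radiusDeriv x₂ y₂) s) s :=
  (hasDerivAt_radius hx₁).add (hasDerivAt_radius hx₂)

theorem strictMono_radiusDeriv_add (hx₁ : x₁ ≠ 0) (hx₂ : x₂ ≠ 0) :
    StrictMono (radiusDeriv x₁ y₁ + radiusDeriv x₂ y₂) :=
  (strictMono_radiusDeriv hx₁).add (strictMono_radiusDeriv hx₂)

theorem continuous_pathLength : Continuous (pathLength x₁ y₁ x₂ y₂) := by
  unfold pathLength radius
  fun_prop

theorem tendsto_pathLength_atTop : Tendsto (pathLength x₁ y₁ x₂ y₂) atTop atTop :=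
  (tendsto_radius_atTop x₁ y₁).atTop_add_atTop (tendsto_radius_atTop x₂ y₂)

theorem left_sub_crossingHeight (h : x₁ ≠ x₂) :
    y₁ - crossingHeight x₁ y₁ x₂ y₂ = (y₁ - y₂) / (x₁ - x₂) * x₁ := by
  have := sub_ne_zero.2 h
  rw [crossingHeight]
  field_simp
  ring

theorem right_sub_crossingHeight (h : x₁ ≠ x₂) :
    y₂ - crossingHeight x₁ y₁ x₂ y₂ = (y₁ - y₂) / (x₁ - x₂) * x₂ := by
  have := sub_ne_zero.2 h
  rw [crossingHeight]
  field_simp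
  ring

theorem pathLength_crossingHeight (hx₁ : 0 < x₁) (hx₂ : x₂ < 0) :
    pathLength x₁ y₁ x₂ y₂ (crossingHeight x₁ y₁ x₂ y₂) =
      √((x₁ - x₂) ^ 2 + (y₁ - y₂) ^ 2) := by
  have hx : 0 < x₁ - x₂ := sub_pos.2 (hx₂.trans hx₁)
  have chord_eq := radius_eq_abs_mul_of_sub_eq_mul (div_mul_cancel₀ (y₁ - y₂) hx.ne').symm
  rw [radius] at chord_eq
  rw [pathLength, radius_eq_abs_mul_of_sub_eq_mul (left_sub_crossingHeight (hx₂.trans hx₁).ne'),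
    radius_eq_abs_mul_of_sub_eq_mul (right_sub_crossingHeight (hx₂.trans hx₁).ne'), chord_eq,
    abs_of_pos hx₁, abs_of_neg hx₂, abs_of_pos hx]
  ring

theorem radiusDeriv_add_crossingHeight (hx₁ : 0 < x₁) (hx₂ : x₂ < 0) :
    (radiusDeriv x₁ y₁ + radiusDeriv x₂ y₂) (crossingHeight x₁ y₁ x₂ y₂) = 0 := by
  rw [Pi.add_apply,
    radiusDeriv_of_sub_eq_mul_of_pos hx₁ (left_sub_crossingHeight (hx₂.trans hx₁).ne'),
    radiusDeriv_of_sub_eq_mul_of_neg hx₂ (right_sub_crossingHeight (hx₂.trans hx₁).ne'),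
    neg_add_cancel]

theorem strictMonoOn_pathLength (hx₁ : 0 < x₁) (hx₂ : x₂ < 0) :
    StrictMonoOn (pathLength x₁ y₁ x₂ y₂) (Ici (crossingHeight x₁ y₁ x₂ y₂)) :=
  strictMonoOn_Ici_of_strictMono_hasDerivAt (hasDerivAt_pathLength hx₁.ne' hx₂.ne)
    (strictMono_radiusDeriv_add hx₁.ne' hx₂.ne) (radiusDeriv_add_crossingHeight hx₁ hx₂)

theorem strictAntiOn_pathLength (hx₁ : 0 < x₁) (hx₂ : x₂ < 0) :
    StrictAntiOn (pathLength x₁ y₁ x₂ y₂) (Iic (crossingHeight x₁ y₁ x₂ y₂)) :=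
  strictAntiOn_Iic_of_strictMono_hasDerivAt (hasDerivAt_pathLength hx₁.ne' hx₂.ne)
    (strictMono_radiusDeriv_add hx₁.ne' hx₂.ne) (radiusDeriv_add_crossingHeight hx₁ hx₂)

theorem sin_add_sin_ne_zero_of_ne_crossingHeight (hx₁ : 0 < x₁) (hx₂ : x₂ < 0)
    (hθ₁ : y₁ - s = radius x₁ y₁ s * sin θ₁) (hθ₂ : y₂ - s = radius x₂ y₂ s * sin θ₂)
    (hs : s ≠ crossingHeight x₁ y₁ x₂ y₂) : sin θ₁ + sin θ₂ ≠ 0 := by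
  have deriv_ne_zero :=
    (strictMono_radiusDeriv_add (y₁ := y₁) (y₂ := y₂) hx₁.ne' hx₂.ne).injective.ne hs
  rwa [radiusDeriv_add_crossingHeight hx₁ hx₂, Pi.add_apply, radiusDeriv_eq_neg_sin hx₁.ne' hθ₁,
    radiusDeriv_eq_neg_sin hx₂.ne hθ₂, ← neg_add, neg_ne_zero] at deriv_ne_zero

end PathLength

/-- Counting the roots of `f(s) = r₁(s) + r₂(s) = t` in the moving-conical-point
representation of the sine wave kernel on `C_{4π}`. Here `q₁ = (x₁,y₁)` with
`x₁ > 0`, `q₂ = (x₂,y₂)` with `x₂ < 0`, `p(s) = (0,s)`, `rᵢ(s) = ‖qᵢ - p(s)‖`,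
`θ₁(s) ∈ (-π/2, π/2)` and `θ₂(s) ∈ (π/2, 3π/2)` are the polar angles of
`qᵢ - p(s)`, `D = ‖q₁ - q₂‖`, and `S = {s > 0 : f(s) = t}`. -/
theorem moving_cone_point_root_count
    (x₁ y₁ x₂ y₂ : ℝ) (hx₁ : 0 < x₁) (hx₂ : x₂ < 0)
    (r₁ r₂ : ℝ → ℝ)
    (hr₁ : r₁ = fun s : ℝ => Real.sqrt (x₁ ^ 2 + (y₁ - s) ^ 2))
    (hr₂ : r₂ = fun s : ℝ => Real.sqrt (x₂ ^ 2 + (y₂ - s) ^ 2))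
    (θ₁ θ₂ : ℝ → ℝ)
    (hθ₁ : ∀ s : ℝ, 0 ≤ s → θ₁ s ∈ Set.Ioo (-(π / 2)) (π / 2) ∧
      x₁ = r₁ s * Real.cos (θ₁ s) ∧ y₁ - s = r₁ s * Real.sin (θ₁ s))
    (hθ₂ : ∀ s : ℝ, 0 ≤ s → θ₂ s ∈ Set.Ioo (π / 2) (3 * π / 2) ∧
      x₂ = r₂ s * Real.cos (θ₂ s) ∧ y₂ - s = r₂ s * Real.sin (θ₂ s))
    (D : ℝ) (hD : D = Real.sqrt ((x₁ - x₂) ^ 2 + (y₁ - y₂) ^ 2))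
    (f : ℝ → ℝ) (hf : f = fun s : ℝ => r₁ s + r₂ s)
    (t : ℝ) (ht : 0 < t) (ht₁ : t ≠ r₁ 0 + r₂ 0) (ht₂ : t ≠ D)
    (S : Set ℝ) (hS : S = {s : ℝ | 0 < s ∧ f s = t}) :
    S.Finite ∧
    (∀ s ∈ S, Real.sin (θ₁ s) + Real.sin (θ₂ s) ≠ 0) ∧
    (0 < x₁ * y₂ - x₂ * y₁ →
      (t < D → S = ∅) ∧
      (D < t → t < r₁ 0 + r₂ 0 → S.ncard = 2) ∧
      (r₁ 0 + r₂ 0 < t → S.ncard = 1)) ∧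
    (x₁ * y₂ - x₂ * y₁ ≤ 0 →
      (t < r₁ 0 + r₂ 0 → S = ∅) ∧
      (r₁ 0 + r₂ 0 < t → S.ncard = 1)) := by
  obtain rfl : r₁ = radius x₁ y₁ := hr₁
  obtain rfl : r₂ = radius x₂ y₂ := hr₂
  obtain rfl : f = pathLength x₁ y₁ x₂ y₂ := hf
  rw [show radius x₁ y₁ 0 + radius x₂ y₂ 0 = pathLength x₁ y₁ x₂ y₂ 0 from rfl]
  have hx : 0 < x₁ - x₂ := sub_pos.2 (hx₂.trans hx₁)
  have path_min := (pathLength_crossingHeight (y₁ := y₁) (y₂ := y₂) hx₁ hx₂).trans hD.symm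
  have hanti := strictAntiOn_pathLength (y₁ := y₁) (y₂ := y₂) hx₁ hx₂
  have hmono := strictMonoOn_pathLength (y₁ := y₁) (y₂ := y₂) hx₁ hx₂
  have one_root (h : pathLength x₁ y₁ x₂ y₂ 0 < t) : S.ncard = 1 :=
    hS ▸ ncard_setOf_lt_and_eq_eq_one hanti hmono continuous_pathLength tendsto_pathLength_atTop h
  subst hS
  refine ⟨(finite_setOf_eq_of_strictAntiOn_Iic_of_strictMonoOn_Ici hanti hmono t).subset
    fun _ hs => hs.2, fun s ⟨hs, hst⟩ => ?_, fun hpos => ⟨fun htD => ?_, fun hDt => ?_, one_root⟩,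
    fun hneg => ⟨fun h => ?_, one_root⟩⟩
  · exact sin_add_sin_ne_zero_of_ne_crossingHeight hx₁ hx₂ (hθ₁ s hs.le).2.2 (hθ₂ s hs.le).2.2
      fun h => ht₂ (by rw [← hst, h, path_min])
  · exact subset_eq_empty (fun _ hs => hs.2)
      (setOf_eq_eq_empty_of_strictAntiOn_Iic_of_strictMonoOn_Ici hanti hmono (path_min ▸ htD))
  · exact ncard_setOf_lt_and_eq_eq_two hanti hmono continuous_pathLength tendsto_pathLength_atTop
      (div_pos hpos hx).le (path_min.trans_lt hDt)
  · exact setOf_lt_and_eq_eq_empty_of_strictMonoOn_Ici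
      (hmono.mono (Ici_subset_Ici.2 (div_nonpos_of_nonpos_of_nonneg hneg hx.le))) h.le
end

section
/- In the configuration below, suppose s ≥ 0 and set t = f(s); assume sin θ₁(s) + sin θ₂(s) ≠ 0. Then t > D and (r₁(s) r₂(s))^{−1/2} · sin( (θ₁(s) + θ₂(s))/2 ) / |sin θ₁(s) + sin θ₂(s)| = (t² − D²)^{−1/2}. -/
open Real

/-!
Let `φ` be the angle at the cone point between the rays towards `q₁` and `q₂`. The law of cosines
turns the gap `(r₁ + r₂)² - D²` into `2 r₁ r₂ (1 + cos φ) = r₁ r₂ (2 cos (φ / 2))²`, while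
`sin θ₁ + sin θ₂ = 2 sin ((θ₁ + θ₂) / 2) cos ((θ₁ - θ₂) / 2)`. The same half-angle cosine appears in
both, so the density identity follows once the position of the angles forces
`sin ((θ₁ + θ₂) / 2) > 0`.
-/

section PolarCoordinates

lemma sq_dist_polar_eq (a b α β : ℝ) :
    (a * cos α - b * cos β) ^ 2 + (a * sin α - b * sin β) ^ 2
      = a ^ 2 + b ^ 2 - 2 * a * b * cos (α - β) := by
  rw [cos_sub]
  linear_combination a ^ 2 * cos_sq_add_sin_sq α + b ^ 2 * cos_sq_add_sin_sq β

lemma add_sq_sub_sq_dist_polar_eq (a b α β : ℝ) :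
    (a + b) ^ 2 - ((a * cos α - b * cos β) ^ 2 + (a * sin α - b * sin β) ^ 2)
      = a * b * (2 * cos ((α - β) / 2)) ^ 2 := by
  have half_angle : cos ((α - β) / 2) ^ 2 = 1 / 2 + cos (α - β) / 2 := by
    rw [cos_sq, mul_div_cancel₀ (α - β) two_ne_zero]
  rw [sq_dist_polar_eq, mul_pow, half_angle]
  ring

variable {α β : ℝ}

lemma cos_half_sub_ne_zero_of_sin_add_sin_ne_zero (h : sin α + sin β ≠ 0) :
    cos ((α - β) / 2) ≠ 0 :=
  right_ne_zero_of_mul (sin_add_sin α β ▸ h)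

lemma sqrt_sq_dist_polar_lt_add {a b : ℝ} (ha : 0 < a) (hb : 0 < b)
    (hcos : cos ((α - β) / 2) ≠ 0) :
    √((a * cos α - b * cos β) ^ 2 + (a * sin α - b * sin β) ^ 2) < a + b := by
  have gap_pos : 0 < a * b * (2 * cos ((α - β) / 2)) ^ 2 := by positivity
  rw [← add_sq_sub_sq_dist_polar_eq, sub_pos] at gap_pos
  exact (sqrt_lt' (add_pos ha hb)).mpr gap_pos

lemma abs_sin_half_add_div_abs_sin_add_sin (hsin : sin ((α + β) / 2) ≠ 0) :
    |sin ((α + β) / 2)| / |sin α + sin β| = |2 * cos ((α - β) / 2)|⁻¹ := by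
  have factor : sin α + sin β = sin ((α + β) / 2) * (2 * cos ((α - β) / 2)) := by
    rw [sin_add_sin]
    ring
  rw [factor, abs_mul, div_mul_cancel_left₀ (abs_ne_zero.mpr hsin)]

lemma inv_sqrt_mul_mul_abs_sin_half_add_div_abs_sin_add_sin (a b : ℝ)
    (hsin : sin ((α + β) / 2) ≠ 0) :
    (√(a * b))⁻¹ * (|sin ((α + β) / 2)| / |sin α + sin β|)
      = (√((a + b) ^ 2
          - ((a * cos α - b * cos β) ^ 2 + (a * sin α - b * sin β) ^ 2)))⁻¹ := by
  rw [abs_sin_half_add_div_abs_sin_add_sin hsin, add_sq_sub_sq_dist_polar_eq,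
    sqrt_mul' _ (sq_nonneg _), sqrt_sq_eq_abs, mul_inv]

end PolarCoordinates

/-- Each transversal root of `f(s) = t` contributes the Cheeger–Taylor density: in the
moving-conical-point configuration (`q₁ = (x₁,y₁)`, `x₁ > 0`; `q₂ = (x₂,y₂)`, `x₂ < 0`;
`p(s) = (0,s)`; `rᵢ(s) = ‖qᵢ - p(s)‖`; `θ₁(s) ∈ (-π/2,π/2)`, `θ₂(s) ∈ (π/2,3π/2)` the
polar angles of `qᵢ - p(s)`; `D = ‖q₁ - q₂‖`), if `s ≥ 0`, `t = r₁(s) + r₂(s)` and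
`sin θ₁(s) + sin θ₂(s) ≠ 0`, then `t > D` and
`(r₁(s) r₂(s))^{-1/2} sin((θ₁(s)+θ₂(s))/2) / |sin θ₁(s) + sin θ₂(s)| = (t² - D²)^{-1/2}`. -/
theorem moving_cone_point_density
    (x₁ y₁ x₂ y₂ : ℝ) (hx₁ : 0 < x₁) (hx₂ : x₂ < 0)
    (r₁ r₂ : ℝ → ℝ)
    (hr₁ : r₁ = fun s : ℝ => Real.sqrt (x₁ ^ 2 + (y₁ - s) ^ 2))
    (hr₂ : r₂ = fun s : ℝ => Real.sqrt (x₂ ^ 2 + (y₂ - s) ^ 2))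
    (θ₁ θ₂ : ℝ → ℝ)
    (hθ₁ : ∀ s : ℝ, 0 ≤ s → θ₁ s ∈ Set.Ioo (-(π / 2)) (π / 2) ∧
      x₁ = r₁ s * Real.cos (θ₁ s) ∧ y₁ - s = r₁ s * Real.sin (θ₁ s))
    (hθ₂ : ∀ s : ℝ, 0 ≤ s → θ₂ s ∈ Set.Ioo (π / 2) (3 * π / 2) ∧
      x₂ = r₂ s * Real.cos (θ₂ s) ∧ y₂ - s = r₂ s * Real.sin (θ₂ s))
    (D : ℝ) (hD : D = Real.sqrt ((x₁ - x₂) ^ 2 + (y₁ - y₂) ^ 2))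
    (f : ℝ → ℝ) (hf : f = fun s : ℝ => r₁ s + r₂ s)
    (s : ℝ) (hs : 0 ≤ s) (t : ℝ) (htf : t = f s)
    (hsin : Real.sin (θ₁ s) + Real.sin (θ₂ s) ≠ 0) :
    D < t ∧
    (Real.sqrt (r₁ s * r₂ s))⁻¹ *
        (Real.sin ((θ₁ s + θ₂ s) / 2) / |Real.sin (θ₁ s) + Real.sin (θ₂ s)|)
      = (Real.sqrt (t ^ 2 - D ^ 2))⁻¹ := by
  obtain ⟨⟨hθ₁_lower, hθ₁_upper⟩, hx₁_polar, hy₁_polar⟩ := hθ₁ s hs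
  obtain ⟨⟨hθ₂_lower, hθ₂_upper⟩, hx₂_polar, hy₂_polar⟩ := hθ₂ s hs
  have r₁_pos : 0 < r₁ s := by
    rw [hr₁]
    positivity
  have r₂_pos : 0 < r₂ s := by
    have x₂_ne_zero := hx₂.ne
    rw [hr₂]
    positivity
  have sin_half_pos : 0 < sin ((θ₁ s + θ₂ s) / 2) :=
    sin_pos_of_pos_of_lt_pi (by linarith) (by linarith)
  have t_eq : t = r₁ s + r₂ s := by rw [htf, hf]
  have D_polar : D = √((r₁ s * cos (θ₁ s) - r₂ s * cos (θ₂ s)) ^ 2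
      + (r₁ s * sin (θ₁ s) - r₂ s * sin (θ₂ s)) ^ 2) := by
    rw [hD, ← hx₁_polar, ← hx₂_polar, ← hy₁_polar, ← hy₂_polar, sub_sub_sub_cancel_right]
  rw [t_eq, D_polar]
  constructor
  · exact sqrt_sq_dist_polar_lt_add r₁_pos r₂_pos
      (cos_half_sub_ne_zero_of_sin_add_sin_ne_zero hsin)
  · rw [sq_sqrt (by positivity),
      ← inv_sqrt_mul_mul_abs_sin_half_add_div_abs_sin_add_sin _ _ sin_half_pos.ne',
      abs_of_pos sin_half_pos]
end

section
/- In the configuration below, let t > 0 with t ≠ r₁ + r₂ and t ≠ D, and let S = {s > 0 : f(s) = t} (a finite set). Then Σ_{s ∈ S} (1/(4π)) (r₁(s) r₂(s))^{−1/2} · sin((θ₁(s)+θ₂(s))/2) / |sin θ₁(s) + sin θ₂(s)| equals: 0 if t < r₁ + r₂ and (x₁y₂ − x₂y₁ ≤ 0 or t < D); (1/(2π)) (t² − D²)^{−1/2} if x₁y₂ − x₂y₁ > 0 and D < t < r₁ + r₂; and (1/(4π)) (t² − D²)^{−1/2} if t > r₁ + r₂. These three values are exactly the Cheeger–Taylor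 formulas for the sine wave kernel E(t, q₁; q₂) on the cone of angle 4π in the regions before the geometric front, between the geometric and diffracted fronts, and beyond the diffracted front; this verifies the moving-conical-point representation E(t, q₁, q₂) = (1/(4π)) ∫_0^∞ (r₁(s)r₂(s))^{−1/2} δ(t − r₁(s) − r₂(s)) sin((θ₁(s)+θ₂(s))/2) ds. -/
open Real

/-!
The travel time `f` through the moving tip is strictly convex along the axis, tends to infinity,
and attains its minimum `D` at the height `c` where the segment from `q₁` to `q₂` crosses the axis.
Hence the level `t` is reached at no `s > 0` before the geometric front, once on each side of `c`
between the geometric and diffracted fronts, and once beyond the diffracted front.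
By the law of cosines, `t² - D² = r₁ r₂ (2 cos ((θ₁ - θ₂) / 2))²` at each such `s`, while
`sin θ₁ + sin θ₂ = 2 sin ((θ₁ + θ₂) / 2) cos ((θ₁ - θ₂) / 2)`. The factors
`sin ((θ₁ + θ₂) / 2)` cancel, so every root contributes the same amount
`(1 / 4π) (t² - D²)^(-1/2)`.
-/

section StrictConvexLevels

open Set Filter

variable {f : ℝ → ℝ} {a b c t : ℝ}

lemma lt_of_strictConvexOn_Icc (hf : StrictConvexOn ℝ (Icc a c) f) (hab : a < b) (hbc : b < c)
    (ha : f a ≤ t) (hc : f c ≤ t) : f b < t := by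
  have hac : a < c := hab.trans hbc
  have hb : b ∈ openSegment ℝ a c := by rw [openSegment_eq_Ioo hac]; exact ⟨hab, hbc⟩
  exact (hf.lt_on_openSegment (left_mem_Icc.2 hac.le) (right_mem_Icc.2 hac.le) hac.ne hb).trans_le
    (max_le ha hc)

lemma existsUnique_gt_of_strictConvexOn (hf : StrictConvexOn ℝ (Ici a) f)
    (hcont : ContinuousOn f (Ici a)) (htop : Tendsto f atTop atTop) (hat : f a < t) :
    ∃! s, a < s ∧ f s = t := by
  have not_two : ∀ {s s'}, a < s → f s = t → f s' = t → ¬ s < s' := fun ha hs hs' hlt =>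
    (lt_of_strictConvexOn_Icc (hf.subset Icc_subset_Ici_self (convex_Icc _ _)) ha hlt
      hat.le hs'.le).ne hs
  obtain ⟨s, has, hs⟩ := intermediate_value_Ioi hcont htop hat
  exact ⟨s, ⟨has, hs⟩, fun s' ⟨has', hs'⟩ =>
    le_antisymm (not_lt.1 (not_two has hs hs')) (not_lt.1 (not_two has' hs' hs))⟩

lemma existsUnique_mem_Ioo_of_strictConvexOn (hf : StrictConvexOn ℝ (Icc a c) f)
    (hcont : ContinuousOn f (Icc a c)) (hac : a < c) (hct : f c < t) (hta : t < f a) :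
    ∃! s, s ∈ Ioo a c ∧ f s = t := by
  have not_two : ∀ {s s'}, s ∈ Ioo a c → f s = t → s' ∈ Ioo a c → f s' = t → ¬ s < s' :=
    fun hs hst hs' hst' hlt =>
      (lt_of_strictConvexOn_Icc (hf.subset (Icc_subset_Icc_left hs.1.le) (convex_Icc _ _)) hlt
        hs'.2 hst.le hct.le).ne hst'
  obtain ⟨s, hs, hst⟩ := intermediate_value_Ioo' hac.le hcont ⟨hct, hta⟩
  exact ⟨s, ⟨hs, hst⟩, fun s' ⟨hs', hst'⟩ =>
    le_antisymm (not_lt.1 (not_two hs hst hs' hst')) (not_lt.1 (not_two hs' hst' hs hst))⟩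

lemma ncard_level_gt_eq_one (hf : StrictConvexOn ℝ (Ici a) f) (hcont : ContinuousOn f (Ici a))
    (htop : Tendsto f atTop atTop) (hat : f a < t) : {s | a < s ∧ f s = t}.ncard = 1 := by
  obtain ⟨s, hs, hs_unique⟩ := existsUnique_gt_of_strictConvexOn hf hcont htop hat
  exact ncard_eq_one.2 ⟨s, eq_singleton_iff_unique_mem.2 ⟨hs, hs_unique⟩⟩

lemma ncard_level_gt_eq_two (hf : StrictConvexOn ℝ (Ici a) f) (hcont : ContinuousOn f (Ici a))
    (htop : Tendsto f atTop atTop) (hac : a < c) (hct : f c < t) (hta : t < f a) :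
    {s | a < s ∧ f s = t}.ncard = 2 := by
  obtain ⟨s₁, ⟨hs₁, hs₁t⟩, hs₁_unique⟩ := existsUnique_mem_Ioo_of_strictConvexOn
    (hf.subset Icc_subset_Ici_self (convex_Icc a c)) (hcont.mono Icc_subset_Ici_self) hac hct hta
  have hsub : Ici c ⊆ Ici a := Ici_subset_Ici.2 hac.le
  obtain ⟨s₂, ⟨hs₂, hs₂t⟩, hs₂_unique⟩ := existsUnique_gt_of_strictConvexOn
    (hf.subset hsub (convex_Ici c)) (hcont.mono hsub) htop hct
  refine ncard_eq_two.2 ⟨s₁, s₂, (hs₁.2.trans hs₂).ne, Subset.antisymm ?_ ?_⟩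
  · rintro s ⟨has, hst⟩
    rcases lt_trichotomy s c with hsc | rfl | hcs
    · exact .inl (hs₁_unique s ⟨⟨has, hsc⟩, hst⟩)
    · exact absurd hst hct.ne
    · exact .inr (hs₂_unique s ⟨hcs, hst⟩)
  · rintro s (rfl | rfl)
    · exact ⟨hs₁.1, hs₁t⟩
    · exact ⟨hac.trans hs₂, hs₂t⟩

lemma level_gt_eq_empty (hf : StrictConvexOn ℝ (Ici c) f) (hca : c ≤ a) (hct : f c ≤ t)
    (hta : t < f a) : {s | a < s ∧ f s = t} = ∅ := by
  refine eq_empty_iff_forall_notMem.2 fun s ⟨has, hst⟩ => ?_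
  rcases hca.lt_or_eq with hlt | rfl
  · exact hta.not_gt (lt_of_strictConvexOn_Icc
      (hf.subset Icc_subset_Ici_self (convex_Icc c s)) hlt has hct hst.le)
  · exact hta.not_ge hct

end StrictConvexLevels

section DiffractedTime

open Set Filter

variable {E : Type*} [NormedAddCommGroup E] [NormedSpace ℝ E] {v q q₁ q₂ : E} {a c t : ℝ}

lemma convexOn_dist_smul (v q : E) : ConvexOn ℝ univ fun s : ℝ => dist (s • v) q :=
  (convexOn_univ_dist q).comp_linearMap (LinearMap.toSpanSingleton ℝ E v)

lemma not_sameRay_smul_sub_smul (hvq : LinearIndependent ℝ ![v, q]) {s s' α β : ℝ}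
    (hne : s ≠ s') (hα : α ≠ 0) (hβ : β ≠ 0) :
    ¬ SameRay ℝ (α • (s • v - q)) (β • (s' • v - q)) := by
  have hdet : (α * s) * (-β) ≠ (-α) * (β * s') := fun h =>
    hne (mul_left_cancel₀ (mul_ne_zero hα hβ) (by linear_combination -h))
  have hind : LinearIndependent ℝ ![α • (s • v - q), β • (s' • v - q)] := by
    have h := (LinearIndependent.pair_add_smul_add_smul_iff (α * s) (-α) (β * s') (-β)).2
      ⟨hvq, hdet⟩
    simpa only [smul_sub, smul_smul, neg_smul, ← sub_eq_add_neg] using h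
  exact fun hray => sameRay_or_sameRay_neg_iff_not_linearIndependent.1 (.inl hray) hind

lemma strictConvexOn_dist_smul [StrictConvexSpace ℝ E] (hvq : LinearIndependent ℝ ![v, q]) :
    StrictConvexOn ℝ univ fun s : ℝ => dist (s • v) q := by
  refine ⟨convex_univ, fun s _ s' _ hne α β hα hβ hαβ => ?_⟩
  have hcombo : (α • s + β • s') • v - q = α • (s • v - q) + β • (s' • v - q) := by
    obtain rfl : β = 1 - α := by linarith
    module
  calc dist ((α • s + β • s') • v) q
      = ‖α • (s • v - q) + β • (s' • v - q)‖ := by rw [dist_eq_norm, hcombo]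
    _ < ‖α • (s • v - q)‖ + ‖β • (s' • v - q)‖ :=
        norm_add_lt_of_not_sameRay (not_sameRay_smul_sub_smul hvq hne hα.ne' hβ.ne')
    _ = α • dist (s • v) q + β • dist (s' • v) q := by
        rw [norm_smul_of_nonneg hα.le, norm_smul_of_nonneg hβ.le, ← dist_eq_norm, ← dist_eq_norm,
          smul_eq_mul, smul_eq_mul]

lemma tendsto_dist_smul_atTop (hv : v ≠ 0) (q : E) :
    Tendsto (fun s : ℝ => dist (s • v) q) atTop atTop := by
  rw [Metric.tendsto_dist_right_atTop_iff, ← tendsto_norm_atTop_iff_cobounded]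
  simpa only [norm_smul] using tendsto_norm_atTop_atTop.atTop_mul_const (norm_pos_iff.2 hv)

/-- The length of the broken path from `q₁` to `q₂` through the tip `s • v`, as a function of `s`:
the arrival time of the wave diffracted by a conical point that moves along the line `ℝ v`. -/
noncomputable def diffractedTime (v q₁ q₂ : E) (s : ℝ) : ℝ := dist (s • v) q₁ + dist (s • v) q₂

lemma strictConvexOn_diffractedTime [StrictConvexSpace ℝ E]
    (hvq : LinearIndependent ℝ ![v, q₁]) (q₂ : E) :
    StrictConvexOn ℝ univ (diffractedTime v q₁ q₂) :=
  (strictConvexOn_dist_smul hvq).add_convexOn (convexOn_dist_smul v q₂)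

lemma continuous_diffractedTime (v q₁ q₂ : E) : Continuous (diffractedTime v q₁ q₂) := by
  unfold diffractedTime
  fun_prop

lemma tendsto_diffractedTime_atTop (hv : v ≠ 0) (q₁ q₂ : E) :
    Tendsto (diffractedTime v q₁ q₂) atTop atTop :=
  (tendsto_dist_smul_atTop hv q₁).atTop_add_nonneg fun _ => dist_nonneg

lemma dist_le_diffractedTime (v q₁ q₂ : E) (s : ℝ) : dist q₁ q₂ ≤ diffractedTime v q₁ q₂ s :=
  dist_triangle_left q₁ q₂ (s • v)

lemma diffractedTime_eq_dist (hc : c • v ∈ segment ℝ q₁ q₂) :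
    diffractedTime v q₁ q₂ c = dist q₁ q₂ := by
  rw [diffractedTime, dist_comm (c • v) q₁, dist_add_dist_of_mem_segment hc]

variable [StrictConvexSpace ℝ E]

lemma level_gt_diffractedTime_eq_empty (hvq : LinearIndependent ℝ ![v, q₁])
    (hc : c • v ∈ segment ℝ q₁ q₂) (h : c ≤ a ∨ t < dist q₁ q₂)
    (hta : t < diffractedTime v q₁ q₂ a) : {s | a < s ∧ diffractedTime v q₁ q₂ s = t} = ∅ := by
  rcases lt_or_ge t (dist q₁ q₂) with hlt | hge
  · exact eq_empty_iff_forall_notMem.2 fun s ⟨_, hst⟩ =>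
      ((hlt.trans_le (dist_le_diffractedTime v q₁ q₂ s)).ne' hst)
  · exact level_gt_eq_empty ((strictConvexOn_diffractedTime hvq q₂).subset (subset_univ _)
      (convex_Ici c)) (h.resolve_right hge.not_gt) ((diffractedTime_eq_dist hc).trans_le hge) hta

lemma ncard_level_gt_diffractedTime_eq_two (hvq : LinearIndependent ℝ ![v, q₁])
    (hc : c • v ∈ segment ℝ q₁ q₂) (hac : a < c) (hdt : dist q₁ q₂ < t)
    (hta : t < diffractedTime v q₁ q₂ a) :
    {s | a < s ∧ diffractedTime v q₁ q₂ s = t}.ncard = 2 :=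
  ncard_level_gt_eq_two
    ((strictConvexOn_diffractedTime hvq q₂).subset (subset_univ _) (convex_Ici a))
    (continuous_diffractedTime v q₁ q₂).continuousOn
    (tendsto_diffractedTime_atTop (hvq.ne_zero 0) q₁ q₂) hac
    ((diffractedTime_eq_dist hc).trans_lt hdt) hta

lemma ncard_level_gt_diffractedTime_eq_one (hvq : LinearIndependent ℝ ![v, q₁])
    (hat : diffractedTime v q₁ q₂ a < t) :
    {s | a < s ∧ diffractedTime v q₁ q₂ s = t}.ncard = 1 :=
  ncard_level_gt_eq_one
    ((strictConvexOn_diffractedTime hvq q₂).subset (subset_univ _) (convex_Ici a))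
    (continuous_diffractedTime v q₁ q₂).continuousOn
    (tendsto_diffractedTime_atTop (hvq.ne_zero 0) q₁ q₂) hat

end DiffractedTime

section ImaginaryAxis

open Complex (I)

variable {q q₁ q₂ : ℂ}

lemma linearIndependent_I_of_re_ne_zero (hq : q.re ≠ 0) : LinearIndependent ℝ ![I, q] := by
  refine LinearIndependent.pair_iff.2 fun a b h => ?_
  have hre : b * q.re = 0 := by simpa using congrArg Complex.re h
  have him : a + b * q.im = 0 := by simpa using congrArg Complex.im h
  obtain rfl : b = 0 := (mul_eq_zero.1 hre).resolve_right hq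
  simpa using him

/-- The height at which the line through `q₁` and `q₂` crosses the imaginary axis. It takes the
junk value `0` when that line is vertical. -/
noncomputable def axisCrossing (q₁ q₂ : ℂ) : ℝ :=
  (q₁.re * q₂.im - q₂.re * q₁.im) / (q₁.re - q₂.re)

lemma axisCrossing_pos_iff (h : q₂.re < q₁.re) :
    0 < axisCrossing q₁ q₂ ↔ 0 < q₁.re * q₂.im - q₂.re * q₁.im :=
  div_pos_iff_of_pos_right (sub_pos.2 h)

lemma axisCrossing_smul_I_mem_segment (h₁ : 0 < q₁.re) (h₂ : q₂.re < 0) :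
    axisCrossing q₁ q₂ • I ∈ segment ℝ q₁ q₂ := by
  have hpos : 0 < q₁.re - q₂.re := sub_pos.2 (h₂.trans h₁)
  refine ⟨-q₂.re / (q₁.re - q₂.re), q₁.re / (q₁.re - q₂.re),
    div_nonneg (neg_nonneg.2 h₂.le) hpos.le, div_nonneg h₁.le hpos.le, by field_simp; ring, ?_⟩
  apply Complex.ext <;>
    simp only [axisCrossing, Complex.add_re, Complex.add_im, Complex.smul_re, Complex.smul_im,
      Complex.I_re, Complex.I_im, smul_eq_mul] <;>
    ring

lemma diffractedTime_I_mk (x₁ y₁ x₂ y₂ s : ℝ) :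
    diffractedTime I ⟨x₁, y₁⟩ ⟨x₂, y₂⟩ s =
      √(x₁ ^ 2 + (y₁ - s) ^ 2) + √(x₂ ^ 2 + (y₂ - s) ^ 2) := by
  simp [diffractedTime, dist_comm (s * I), Complex.dist_eq_re_im]

end ImaginaryAxis

section RootContribution

/-- The contribution of a root `s` of `f s = t` to the integral of
`(1 / 4π) (r₁ r₂)^(-1/2) sin ((θ₁ + θ₂) / 2) δ(t - f)`, where `(rᵢ, θᵢ)` are the polar coordinates
of `qᵢ` around the tip `p s`; the denominator is `|f' s|`. -/
noncomputable def rootContribution (r₁ r₂ θ₁ θ₂ : ℝ) : ℝ :=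
  (1 / (4 * π)) * (√(r₁ * r₂))⁻¹ * (sin ((θ₁ + θ₂) / 2) / |sin θ₁ + sin θ₂|)

lemma sq_add_sub_sq_dist_polar (r₁ r₂ θ₁ θ₂ : ℝ) :
    (r₁ + r₂) ^ 2 - ((r₁ * cos θ₁ - r₂ * cos θ₂) ^ 2 + (r₁ * sin θ₁ - r₂ * sin θ₂) ^ 2) =
      r₁ * r₂ * (2 * cos ((θ₁ - θ₂) / 2)) ^ 2 := by
  have half_angle : cos θ₁ * cos θ₂ + sin θ₁ * sin θ₂ = 2 * cos ((θ₁ - θ₂) / 2) ^ 2 - 1 := by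
    rw [← cos_sub, ← cos_two_mul, mul_div_cancel₀ _ two_ne_zero]
  linear_combination (-r₁ ^ 2) * sin_sq_add_cos_sq θ₁ - r₂ ^ 2 * sin_sq_add_cos_sq θ₂ +
    2 * r₁ * r₂ * half_angle

lemma rootContribution_eq {r₁ r₂ θ₁ θ₂ x₁ y₁ x₂ y₂ : ℝ} (hr : 0 ≤ r₁ * r₂)
    (hθ₁ : θ₁ ∈ Set.Ioo (-(π / 2)) (π / 2)) (hθ₂ : θ₂ ∈ Set.Ioo (π / 2) (3 * π / 2))
    (hx₁ : x₁ = r₁ * cos θ₁) (hy₁ : y₁ = r₁ * sin θ₁)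
    (hx₂ : x₂ = r₂ * cos θ₂) (hy₂ : y₂ = r₂ * sin θ₂) :
    rootContribution r₁ r₂ θ₁ θ₂ =
      (1 / (4 * π)) * (√((r₁ + r₂) ^ 2 - ((x₁ - x₂) ^ 2 + (y₁ - y₂) ^ 2)))⁻¹ := by
  have hsin : 0 < sin ((θ₁ + θ₂) / 2) :=
    sin_pos_of_pos_of_lt_pi (by linarith [hθ₁.1, hθ₂.1]) (by linarith [hθ₁.2, hθ₂.2])
  have cancel_sin : sin ((θ₁ + θ₂) / 2) / |sin θ₁ + sin θ₂| = |2 * cos ((θ₁ - θ₂) / 2)|⁻¹ := by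
    rw [sin_add_sin, mul_right_comm, mul_comm, abs_mul, abs_of_pos hsin,
      div_mul_cancel_left₀ hsin.ne']
  rw [rootContribution, cancel_sin, hx₁, hy₁, hx₂, hy₂, sq_add_sub_sq_dist_polar, sqrt_mul hr,
    sqrt_sq_eq_abs, mul_inv, mul_assoc]

lemma sum_rootContribution_eq {T : Finset ℝ} {r₁ r₂ θ₁ θ₂ : ℝ → ℝ} {x₁ y₁ x₂ y₂ t : ℝ}
    (hr : ∀ s ∈ T, 0 ≤ r₁ s * r₂ s) (hsum : ∀ s ∈ T, r₁ s + r₂ s = t)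
    (hθ₁ : ∀ s ∈ T, θ₁ s ∈ Set.Ioo (-(π / 2)) (π / 2) ∧
      x₁ = r₁ s * cos (θ₁ s) ∧ y₁ - s = r₁ s * sin (θ₁ s))
    (hθ₂ : ∀ s ∈ T, θ₂ s ∈ Set.Ioo (π / 2) (3 * π / 2) ∧
      x₂ = r₂ s * cos (θ₂ s) ∧ y₂ - s = r₂ s * sin (θ₂ s)) :
    ∑ s ∈ T, rootContribution (r₁ s) (r₂ s) (θ₁ s) (θ₂ s) =
      T.card * ((1 / (4 * π)) * (√(t ^ 2 - ((x₁ - x₂) ^ 2 + (y₁ - y₂) ^ 2)))⁻¹) := by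
  refine (Finset.sum_eq_card_nsmul fun s hs => ?_).trans (nsmul_eq_mul _ _)
  obtain ⟨hθ₁_mem, hx₁, hy₁⟩ := hθ₁ s hs
  obtain ⟨hθ₂_mem, hx₂, hy₂⟩ := hθ₂ s hs
  rw [rootContribution_eq (hr s hs) hθ₁_mem hθ₂_mem hx₁ hy₁ hx₂ hy₂, hsum s hs,
    sub_sub_sub_cancel_right]

end RootContribution

/-- The moving-conical-point representation reproduces the Cheeger–Taylor formulas for
the sine wave kernel on `C_{4π}`: with `q₁ = (x₁,y₁)`, `x₁ > 0`, `q₂ = (x₂,y₂)`,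
`x₂ < 0`, `p(s) = (0,s)`, `rᵢ(s) = ‖qᵢ - p(s)‖`, `θ₁(s) ∈ (-π/2,π/2)`,
`θ₂(s) ∈ (π/2,3π/2)` the polar angles of `qᵢ - p(s)`, `D = ‖q₁ - q₂‖`,
`f(s) = r₁(s) + r₂(s)` and the finite set `S = {s > 0 : f(s) = t}`, the sum
`∑_{s ∈ S} (1/4π)(r₁(s)r₂(s))^{-1/2} sin((θ₁(s)+θ₂(s))/2)/|sin θ₁(s)+sin θ₂(s)|`
equals `0` before the geometric front, `(1/2π)(t²-D²)^{-1/2}` between the geometric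
and diffracted fronts, and `(1/4π)(t²-D²)^{-1/2}` beyond the diffracted front. -/
theorem moving_cone_point_cheeger_taylor
    (x₁ y₁ x₂ y₂ : ℝ) (hx₁ : 0 < x₁) (hx₂ : x₂ < 0)
    (r₁ r₂ : ℝ → ℝ)
    (hr₁ : r₁ = fun s : ℝ => Real.sqrt (x₁ ^ 2 + (y₁ - s) ^ 2))
    (hr₂ : r₂ = fun s : ℝ => Real.sqrt (x₂ ^ 2 + (y₂ - s) ^ 2))
    (θ₁ θ₂ : ℝ → ℝ)
    (hθ₁ : ∀ s : ℝ, 0 ≤ s → θ₁ s ∈ Set.Ioo (-(π / 2)) (π / 2) ∧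
      x₁ = r₁ s * Real.cos (θ₁ s) ∧ y₁ - s = r₁ s * Real.sin (θ₁ s))
    (hθ₂ : ∀ s : ℝ, 0 ≤ s → θ₂ s ∈ Set.Ioo (π / 2) (3 * π / 2) ∧
      x₂ = r₂ s * Real.cos (θ₂ s) ∧ y₂ - s = r₂ s * Real.sin (θ₂ s))
    (D : ℝ) (hD : D = Real.sqrt ((x₁ - x₂) ^ 2 + (y₁ - y₂) ^ 2))
    (f : ℝ → ℝ) (hf : f = fun s : ℝ => r₁ s + r₂ s)
    (t : ℝ) (ht : 0 < t) (ht₁ : t ≠ r₁ 0 + r₂ 0) (ht₂ : t ≠ D)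
    (S : Set ℝ) (hS : S = {s : ℝ | 0 < s ∧ f s = t}) (hSfin : S.Finite) :
    ((t < r₁ 0 + r₂ 0 ∧ (x₁ * y₂ - x₂ * y₁ ≤ 0 ∨ t < D)) →
      ∑ s ∈ hSfin.toFinset,
        (1 / (4 * π)) * (Real.sqrt (r₁ s * r₂ s))⁻¹ *
          (Real.sin ((θ₁ s + θ₂ s) / 2) / |Real.sin (θ₁ s) + Real.sin (θ₂ s)|) = 0) ∧
    ((0 < x₁ * y₂ - x₂ * y₁ ∧ D < t ∧ t < r₁ 0 + r₂ 0) →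
      ∑ s ∈ hSfin.toFinset,
        (1 / (4 * π)) * (Real.sqrt (r₁ s * r₂ s))⁻¹ *
          (Real.sin ((θ₁ s + θ₂ s) / 2) / |Real.sin (θ₁ s) + Real.sin (θ₂ s)|)
        = (1 / (2 * π)) * (Real.sqrt (t ^ 2 - D ^ 2))⁻¹) ∧
    (r₁ 0 + r₂ 0 < t →
      ∑ s ∈ hSfin.toFinset,
        (1 / (4 * π)) * (Real.sqrt (r₁ s * r₂ s))⁻¹ *
          (Real.sin ((θ₁ s + θ₂ s) / 2) / |Real.sin (θ₁ s) + Real.sin (θ₂ s)|)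
        = (1 / (4 * π)) * (Real.sqrt (t ^ 2 - D ^ 2))⁻¹) := by
  let q₁ : ℂ := ⟨x₁, y₁⟩
  let q₂ : ℂ := ⟨x₂, y₂⟩
  have hindep : LinearIndependent ℝ ![Complex.I, q₁] := linearIndependent_I_of_re_ne_zero hx₁.ne'
  have hcross := axisCrossing_smul_I_mem_segment (q₁ := q₁) (q₂ := q₂) hx₁ hx₂
  have hcross_pos : 0 < axisCrossing q₁ q₂ ↔ 0 < x₁ * y₂ - x₂ * y₁ :=
    axisCrossing_pos_iff (hx₂.trans hx₁)
  have hD_sq : D ^ 2 = (x₁ - x₂) ^ 2 + (y₁ - y₂) ^ 2 := by rw [hD, sq_sqrt (by positivity)]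
  obtain rfl : D = dist q₁ q₂ := by rw [hD, Complex.dist_eq_re_im]
  have hf_eq : f = diffractedTime Complex.I q₁ q₂ := by
    ext s; rw [hf, hr₁, hr₂, diffractedTime_I_mk]
  have hf_zero : r₁ 0 + r₂ 0 = diffractedTime Complex.I q₁ q₂ 0 := by rw [← hf_eq, hf]
  have hmem : ∀ s ∈ hSfin.toFinset, 0 < s ∧ r₁ s + r₂ s = t := by simp [hS, hf]
  have hsum := sum_rootContribution_eq (fun s _ => by rw [hr₁, hr₂]; positivity)
    (fun s hs => (hmem s hs).2) (fun s hs => hθ₁ s (hmem s hs).1.le)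
    (fun s hs => hθ₂ s (hmem s hs).1.le)
  rw [← Set.ncard_eq_toFinset_card S hSfin, ← hD_sq] at hsum
  rw [hf_eq] at hS
  rw [hf_zero]
  refine ⟨fun ⟨hlt, h⟩ => hsum.trans ?_, fun ⟨hpos, hDt, hlt⟩ => hsum.trans ?_,
    fun hlt => hsum.trans ?_⟩
  · rw [hS, level_gt_diffractedTime_eq_empty hindep hcross
      (h.imp_left fun hle => not_lt.1 (mt hcross_pos.1 hle.not_gt)) hlt]
    simp
  · rw [hS, ncard_level_gt_diffractedTime_eq_two hindep hcross (hcross_pos.2 hpos)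
      hDt hlt, Nat.cast_two]
    ring
  · rw [hS, ncard_level_gt_diffractedTime_eq_one hindep hlt, Nat.cast_one, one_mul]
end
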